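/- Suppose r_i β_i⁺ e^{d_i⁺ r_i} < e for each i = 1,…,m, and suppose the Nicholson system is uniformly persistent at 0: there exists M > 0 such that for every φ ∈ X₊ with φ(0) ≫ 0 there is t₀ with y_i(t,φ) ≥ M for all t ≥ t₀ and all i. Then there exists a function b : ℝ → ℝ^m, with every component almost periodic, with inf_{t∈ℝ} b_i(t) > 0 for each i, which solves the Nicholson system for all t ∈ ℝ, such that every solution with initial value φ ∈ X₊ with φ(0) ≫ 0 converges to it asymptotically: max over i of sup over s ∈ [−r_i,0] of |y_i(t+s,φ) − b_i(t+s)| tends to 0 as t → ∞; moreover b is the unique almost periodic entire solution with all components bounded away from 0. -/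

import Mathlib

open MeasureTheory Filter Topology Set

noncomputable section

namespace Nicholson

/-- An almost periodic function: continuous, with a relatively dense set of
`ε`-periods for every `ε > 0`. -/
def AlmostPeriodic (f : ℝ → ℝ) : Prop :=
  Continuous f ∧ ∀ ε > 0, ∃ L > 0, ∀ a : ℝ, ∃ s ∈ Set.Icc a (a + L),
    ∀ t, |f (t + s) - f t| < ε

/-- The phase space `X = C([-r₁,0]) × ⋯ × C([-r_m,0])` (as plain functions;
continuity is carried by the solutions). -/
abbrev XN (m : ℕ) (r : Fin m → ℝ) := ∀ i : Fin m, Set.Icc (-(r i)) (0:ℝ) → ℝ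

/-- The cone `X₊` of componentwise nonnegative functions. -/
def XPos {m : ℕ} {r : Fin m → ℝ} (φ : XN m r) : Prop := ∀ i s, 0 ≤ φ i s

/-- The point `0 ∈ [-rᵢ,0]`. -/
def pt0N {m : ℕ} (r : Fin m → ℝ) (hr : ∀ i, 0 < r i) (i : Fin m) :
    Set.Icc (-(r i)) (0:ℝ) :=
  ⟨0, Set.mem_Icc.mpr ⟨by linarith [hr i], le_rfl⟩⟩

/-- The point `-rᵢ ∈ [-rᵢ,0]`. -/
def ptnegN {m : ℕ} (r : Fin m → ℝ) (hr : ∀ i, 0 < r i) (i : Fin m) :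
    Set.Icc (-(r i)) (0:ℝ)  :=
  ⟨-(r i), Set.mem_Icc.mpr ⟨le_rfl, by linarith [hr i]⟩⟩

/-- Conditions (a1)-(a6) on the coefficients of the Nicholson system. -/
def NicholsonHyps (m : ℕ) (d : Fin m → ℝ → ℝ) (a : Fin m → Fin m → ℝ → ℝ)
    (β c : Fin m → ℝ → ℝ) : Prop :=
  (∀ i, AlmostPeriodic (d i)) ∧ (∀ i j, AlmostPeriodic (a i j)) ∧
  (∀ i, AlmostPeriodic (β i)) ∧ (∀ i, AlmostPeriodic (c i)) ∧
  (∃ d₀ > 0, ∀ i t, d₀ ≤ d i t) ∧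
  (∀ i j t, 0 ≤ a i j t) ∧ (∀ i t, a i i t = 0) ∧
  (∀ i t, 0 < β i t) ∧
  (∃ c₀ > 0, ∀ i t, c₀ ≤ c i t) ∧
  (∀ i t, 0 < d i t - ∑ j, a j i t)

/-- The right-hand side of the `i`-th Nicholson equation along a function `y`. -/
def rhs {m : ℕ} (d : Fin m → ℝ → ℝ) (a : Fin m → Fin m → ℝ → ℝ) (β c : Fin m → ℝ → ℝ)
    (r : Fin m → ℝ) (i : Fin m) (t : ℝ) (y : ℝ → Fin m → ℝ) : ℝ :=
  -(d i t) * y t i + (∑ j, a i j t * y t j) +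
    β i t * y (t - r i) i * Real.exp (-(c i t * y (t - r i) i))

/-- `y` is the solution of the Nicholson system with initial value `φ ∈ X`. -/
def SolN {m : ℕ} (d : Fin m → ℝ → ℝ) (a : Fin m → Fin m → ℝ → ℝ) (β c : Fin m → ℝ → ℝ)
    (r : Fin m → ℝ) (φ : XN m r) (y : ℝ → Fin m → ℝ) : Prop :=
  (∀ i, ContinuousOn (fun t => y t i) (Set.Ici (-(r i)))) ∧
  (∀ i (s : Set.Icc (-(r i)) (0:ℝ)), y (s : ℝ) i = φ i s) ∧
  ∀ i t, 0 ≤ t → HasDerivWithinAt (fun u => y u i) (rhs d a β c r i t y) (Set.Ici t) t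

/-- `b` is an entire (globally defined) solution of the Nicholson system. -/
def EntireSolN {m : ℕ} (d : Fin m → ℝ → ℝ) (a : Fin m → Fin m → ℝ → ℝ)
    (β c : Fin m → ℝ → ℝ) (r : Fin m → ℝ) (b : ℝ → Fin m → ℝ) : Prop :=
  ∀ i t, HasDerivAt (fun u => b u i) (rhs d a β c r i t b) t

/-- The segment `y_t ∈ X` of `y`. -/
def segN {m : ℕ} (r : Fin m → ℝ) (y : ℝ → Fin m → ℝ) (t : ℝ) : XN m r :=
  fun i s => y (t + (s : ℝ)) i

/-- The exponential order `φ ≤_B ψ` for `B = diag(-μ₁,…,-μ_m)`. -/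
def expLeN {m : ℕ} (μ : Fin m → ℝ) {r : Fin m → ℝ} (φ ψ : XN m r) : Prop :=
  (∀ i s, φ i s ≤ ψ i s) ∧
  ∀ i, ∀ s t : Set.Icc (-(r i)) (0:ℝ), (s : ℝ) ≤ (t : ℝ) →
    (ψ i s - φ i s) * Real.exp (μ i * (s : ℝ)) ≤ (ψ i t - φ i t) * Real.exp (μ i * (t : ℝ))

/-- The zero element of `X`. -/
def zeroN (m : ℕ) (r : Fin m → ℝ) : XN m r := fun _ _ => 0

/-- Extension of the `i`-th component of `φ` to `ℝ` by the projection onto `[-rᵢ,0]`. -/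
def extN {m : ℕ} {r : Fin m → ℝ} (hr : ∀ i, 0 < r i) (φ : XN m r) (i : Fin m) : ℝ → ℝ :=
  fun s => φ i (Set.projIcc (-(r i)) 0 (by linarith [hr i]) s)

/-- `φ ≫_B 0`: `φ` is Lipschitz, `φᵢ(-rᵢ) > 0` and
`ess inf (φᵢ' + μᵢ φᵢ) > 0` on `[-rᵢ,0]` for each `i`. -/
def strPosN {m : ℕ} {r : Fin m → ℝ} (hr : ∀ i, 0 < r i) (μ : Fin m → ℝ)
    (φ : XN m r) : Prop :=
  (∀ i, ∃ K, LipschitzWith K (φ i)) ∧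
  (∀ i, 0 < φ i (ptnegN r hr i)) ∧
  ∀ i, ∃ ε > 0, ∀ᵐ s ∂(volume.restrict (Set.Ioo (-(r i)) (0:ℝ))),
    DifferentiableAt ℝ (extN hr φ i) s ∧
    ε ≤ deriv (extN hr φ i) s + μ i * extN hr φ i s

/-- The Nicholson nonlinearity `fᵢ(t,φ)`. -/
def fN {m : ℕ} (d : Fin m → ℝ → ℝ) (a : Fin m → Fin m → ℝ → ℝ) (β c : Fin m → ℝ → ℝ)
    (r : Fin m → ℝ) (hr : ∀ i, 0 < r i) (i : Fin m) (t : ℝ) (φ : XN m r) : ℝ :=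
  -(d i t) * φ i (pt0N r hr i) + (∑ j, a i j t * φ j (pt0N r hr j)) +
    β i t * φ i (ptnegN r hr i) * Real.exp (-(c i t * φ i (ptnegN r hr i)))

/-- The supremum over `ℝ` of a real function. -/
def supR (f : ℝ → ℝ) : ℝ := sSup (Set.range f)

/-- The exponents `μᵢ = (1/rᵢ) ln(e²/(rᵢ βᵢ⁺))`. -/
def muN {m : ℕ} (r : Fin m → ℝ) (β : Fin m → ℝ → ℝ) (i : Fin m) : ℝ :=
  (1 / r i) * Real.log (Real.exp 2 / (r i * supR (β i)))

end Nicholson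

namespace Nicholson

theorem AP_unif {f : ℝ → ℝ} (hf : AlmostPeriodic f) {ε : ℝ} (hε : 0 < ε) :
    ∃ δ > 0, ∀ t u, |t - u| < δ → |f t - f u| < ε := by
  obtain ⟨L, hL, h⟩ := hf.2 (ε/3) (by positivity)
  have hc : UniformContinuousOn f (Icc (-1) (L+1)) :=
    isCompact_Icc.uniformContinuousOn_of_continuous hf.1.continuousOn
  rw [Metric.uniformContinuousOn_iff] at hc
  obtain ⟨δ, hδ, hc⟩ := hc (ε/3) (by positivity)
  refine ⟨min δ 1, by positivity, fun t u htu => ?_⟩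
  obtain ⟨s, ⟨hs1, hs2⟩, hs⟩ := h (-t)
  have h1 := lt_of_lt_of_le htu (min_le_left _ _)
  have h2 := lt_of_lt_of_le htu (min_le_right _ _)
  have h3 := hc (t+s) ⟨by linarith, by linarith⟩ (u+s)
    ⟨by linarith [(abs_lt.1 h2).2], by linarith [(abs_lt.1 h2).1]⟩
    (by rw [Real.dist_eq]; simpa using h1)
  rw [Real.dist_eq] at h3
  have h4 := hs t
  have h5 := hs u
  rw [abs_lt] at *
  constructor <;> linarith [h3.1, h3.2, h4.1, h4.2, h5.1, h5.2]

theorem AP_bdd {f : ℝ → ℝ} (hf : AlmostPeriodic f) : ∃ B, ∀ t, |f t| ≤ B := by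
  obtain ⟨L, hL, h⟩ := hf.2 1 one_pos
  obtain ⟨B, hB⟩ := isCompact_Icc.exists_bound_of_continuousOn (s := Icc 0 L) hf.1.continuousOn
  refine ⟨B + 1, fun t => ?_⟩
  obtain ⟨s, ⟨hs1, hs2⟩, hs⟩ := h (-t)
  have h1 := hB (t+s) ⟨by linarith, by linarith⟩
  have h2 := hs t
  rw [Real.norm_eq_abs] at h1
  rw [abs_lt] at h2
  rw [abs_le] at *
  constructor <;> linarith [h1.1, h1.2, h2.1, h2.2]

theorem AP_col {f : ℝ → ℝ} (hf : AlmostPeriodic f) {ε : ℝ} (hε : 0 < ε) :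
    ∃ N : ℕ, ∃ col : ℝ → Fin (N+1), ∀ s s', col s = col s' → ∀ t, |f (t + s) - f (t + s')| < ε := by
  obtain ⟨L, hL, h⟩ := hf.2 (ε/4) (by positivity)
  obtain ⟨δ, hδ, hc⟩ := AP_unif hf (ε := ε/2) (by positivity)
  choose p hp hp' using fun s : ℝ => h (s - L)
  have hq : ∀ s, 0 ≤ s - p s ∧ s - p s ≤ L := fun s =>
    ⟨by linarith [(hp s).2], by linarith [(hp s).1]⟩
  have hN : ∀ s, ⌊(s - p s)/δ⌋₊ < ⌊L/δ⌋₊ + 1 := fun s => by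
    apply Nat.lt_succ_of_le
    apply Nat.floor_le_floor
    have := (hq s).2
    gcongr
  refine ⟨⌊L/δ⌋₊, fun s => ⟨⌊(s - p s)/δ⌋₊, hN s⟩, fun s s' hss t => ?_⟩
  have hss : ⌊(s - p s)/δ⌋₊ = ⌊(s' - p s')/δ⌋₊ := by simpa using hss
  have a1 := Nat.floor_le (div_nonneg (hq s).1 hδ.le)
  have a2 := Nat.lt_floor_add_one ((s - p s)/δ)
  have b1 := Nat.floor_le (div_nonneg (hq s').1 hδ.le)
  have b2 := Nat.lt_floor_add_one ((s' - p s')/δ)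
  rw [hss] at a1 a2
  have e : |(s - p s)/δ - (s' - p s')/δ| < 1 := by
    rw [abs_lt]; constructor <;> linarith
  rw [← sub_div, abs_div, abs_of_pos hδ, div_lt_one hδ] at e
  have h3 := hc (t + (s - p s)) (t + (s' - p s')) (by rw [add_sub_add_left_eq_sub]; exact e)
  have h4 := hp' s (t + (s - p s))
  have h5 := hp' s' (t + (s' - p s'))
  rw [show t + (s - p s) + p s = t + s by ring] at h4
  rw [show t + (s' - p s') + p s' = t + s' by ring] at h5
  rw [abs_lt] at *
  constructor <;> linarith [h3.1, h3.2, h4.1, h4.2, h5.1, h5.2]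

theorem AP_common {ι : Type*} [Fintype ι] {f : ι → ℝ → ℝ} (hf : ∀ k, AlmostPeriodic (f k))
    {ε : ℝ} (hε : 0 < ε) :
    ∃ L > 0, ∀ a : ℝ, ∃ s ∈ Icc a (a + L), ∀ k t, |f k (t + s) - f k t| < ε := by
  classical
  choose N col hcol using fun k => AP_col (hf k) hε
  let C : ℝ → (∀ k, Fin (N k + 1)) := fun s k => col k s
  let rep : (∀ k, Fin (N k + 1)) → ℝ := fun x => if h : ∃ s, C s = x then h.choose else 0
  have hrep : ∀ s, C (rep (C s)) = C s := fun s => by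
    have h : ∃ s', C s' = C s := ⟨s, rfl⟩
    simp only [rep, dif_pos h]
    exact h.choose_spec
  obtain ⟨B, hB⟩ : ∃ B, ∀ x, |rep x| ≤ B := by
    obtain ⟨B, hB⟩ := (Set.finite_range (fun x => |rep x|)).bddAbove
    exact ⟨B, fun x => hB ⟨x, rfl⟩⟩
  have hB0 : 0 ≤ B := le_trans (abs_nonneg _) (hB (C 0))
  refine ⟨2*B+1, by positivity, fun a => ?_⟩
  have h1 := abs_le.1 (hB (C (a+B)))
  refine ⟨a + B - rep (C (a+B)), ⟨by linarith, by linarith⟩, fun k t => ?_⟩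
  have := hcol k (a+B) (rep (C (a+B))) (congrFun (hrep (a+B)) k).symm (t - rep (C (a+B)))
  rw [sub_add_cancel] at this
  convert this using 3
  ring_nf

theorem AP_window {f : ℝ → ℝ} (hf : AlmostPeriodic f) (h0 : ∀ t, 0 ≤ f t) (hp : 0 < f 0) :
    ∃ L > 0, ∃ κ > 0, ∀ t, κ ≤ ∫ u in t..(t+L), f u := by
  obtain ⟨L, hL, h⟩ := hf.2 (f 0 / 3) (by positivity)
  obtain ⟨δ, hδ, hc⟩ := AP_unif hf (ε := f 0/3) (by positivity)
  refine ⟨L + δ, by positivity, (δ/2) * (f 0/3), by positivity, fun t => ?_⟩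
  obtain ⟨s, ⟨hs1, hs2⟩, hs⟩ := h t
  have hi : ∀ a b, IntervalIntegrable f volume a b := fun a b => hf.1.intervalIntegrable a b
  have e1 : ∫ u in t..(t+(L+δ)), f u = (∫ u in t..s, f u) + (∫ u in s..(s+δ/2), f u)
      + ∫ u in (s+δ/2)..(t+(L+δ)), f u := by
    rw [intervalIntegral.integral_add_adjacent_intervals (hi _ _) (hi _ _),
      intervalIntegral.integral_add_adjacent_intervals (hi _ _) (hi _ _)]
  have e2 : 0 ≤ ∫ u in t..s, f u := intervalIntegral.integral_nonneg hs1 (fun u _ => h0 u)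
  have e3 : 0 ≤ ∫ u in (s+δ/2)..(t+(L+δ)), f u :=
    intervalIntegral.integral_nonneg (by linarith) (fun u _ => h0 u)
  have e4 : ∫ u in s..(s+δ/2), (f 0/3) ≤ ∫ u in s..(s+δ/2), f u := by
    apply intervalIntegral.integral_mono_on (by linarith) (by simp) (hi _ _)
    intro u hu
    have g1 := hs (u - s)
    have g2 := hc (u-s) 0 (by rw [abs_lt]; constructor <;> linarith [hu.1, hu.2])
    rw [sub_add_cancel] at g1
    rw [abs_lt] at *
    linarith [g1.1, g2.1]
  simp only [intervalIntegral.integral_const, smul_eq_mul] at e4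
  have : (s + δ/2 - s) = δ/2 := by ring
  rw [this] at e4
  linarith

end Nicholson

namespace Nicholson

/-- Structural constants used in the contraction argument. -/
structure Core {m : ℕ} (d : Fin m → ℝ → ℝ) (a : Fin m → Fin m → ℝ → ℝ) (β c : Fin m → ℝ → ℝ)
    (r μ : Fin m → ℝ) (η₀ L κ B R c₀ : ℝ) : Prop where
  η₀pos : 0 < η₀
  Lpos : 0 < L
  κpos : 0 < κ
  Bpos : 0 < B
  Rpos : 0 < R
  c₀pos : 0 < c₀
  rpos : ∀ i, 0 < r i
  rle : ∀ i, r i ≤ R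
  μle : ∀ i, μ i ≤ B
  d0 : ∀ i t, 0 ≤ d i t
  dB : ∀ i t, d i t ≤ B
  a0 : ∀ i j t, 0 ≤ a i j t
  aB : ∀ i j t, a i j t ≤ B
  b0 : ∀ i t, 0 ≤ β i t
  bB : ∀ i t, β i t ≤ B
  cB : ∀ i t, c i t ≤ B
  cc : ∀ i t, c₀ ≤ c i t
  slack : ∀ i t, η₀ ≤ μ i - d i t - β i t * (Real.exp (-2) * Real.exp (μ i * r i))
  bcont : ∀ i, Continuous (β i)
  window : ∀ i t, κ ≤ ∫ u in t..(t+L), β i u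

/-- `x` is an `ε`-approximate solution on `[t₀,∞)` with values in `[M,K]` on `[t₀-R,∞)`. -/
structure Apx {m : ℕ} (d : Fin m → ℝ → ℝ) (a : Fin m → Fin m → ℝ → ℝ) (β c : Fin m → ℝ → ℝ)
    (r : Fin m → ℝ) (R ε M K t₀ : ℝ) (x x' : ℝ → Fin m → ℝ) : Prop where
  der : ∀ i t, t₀ ≤ t → HasDerivAt (fun u => x u i) (x' t i) t
  cont : ∀ i, ContinuousOn (fun u => x' u i) (Ici t₀)
  err : ∀ i t, t₀ ≤ t → |x' t i - rhs d a β c r i t x| ≤ ε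
  lb : ∀ i t, t₀ - R ≤ t → M ≤ x t i
  ub : ∀ i t, t₀ - R ≤ t → x t i ≤ K

theorem h_lip {c p q : ℝ} (hc : 0 < c) (hpq : p ≤ q) :
    -(Real.exp (-2)) * (q - p) ≤ q * Real.exp (-(c*q)) - p * Real.exp (-(c*p)) := by
  have hd : ∀ x : ℝ, HasDerivAt (fun x => x * Real.exp (-(c*x)) + Real.exp (-2) * x)
      ((1 - c*x) * Real.exp (-(c*x)) + Real.exp (-2)) x := fun x => by
    have h1 : HasDerivAt (fun x => -(c*x)) (-c) x := 
      (((hasDerivAt_id x).const_mul c).neg).congr_deriv (by simp)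
    have h2 := ((hasDerivAt_id x).mul h1.exp).add ((hasDerivAt_id x).const_mul (Real.exp (-2)))
    refine (h2.congr_deriv ?_)
    simp; ring
  have hmono : Monotone (fun x => x * Real.exp (-(c*x)) + Real.exp (-2) * x) := by
    apply monotone_of_deriv_nonneg (fun x => (hd x).differentiableAt)
    intro x
    rw [(hd x).deriv]
    have h1 := Real.add_one_le_exp (c*x - 2)
    have h2 : Real.exp (-2) = Real.exp (c*x-2) * Real.exp (-(c*x)) := by
      rw [← Real.exp_add]; ring_nf
    rw [h2, ← add_mul]
    apply mul_nonneg _ (Real.exp_pos _).le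
    linarith
  have := hmono hpq
  simp only at this
  linarith

theorem h_sub {c y l M K B c₀ : ℝ} (hc0 : 0 < c₀) (hc : c₀ ≤ c) (hcB : c ≤ B) (hM : 0 < M) (hy : M ≤ y)
    (hyK : y ≤ K) (hl : 0 ≤ l) (hl1 : l ≤ 1) :
    l * (1 - l) * (c₀ * M^2 * Real.exp (-(B*K))) ≤
      (l*y) * Real.exp (-(c*(l*y))) - l * (y * Real.exp (-(c*y))) := by
  have e1 : (l*y) * Real.exp (-(c*(l*y))) - l * (y * Real.exp (-(c*y))) =
      l * y * Real.exp (-(c*y)) * (Real.exp (c*y*(1-l)) - 1) := by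
    have : Real.exp (-(c*(l*y))) = Real.exp (-(c*y)) * Real.exp (c*y*(1-l)) := by
      rw [← Real.exp_add]; ring_nf
    rw [this]; ring
  rw [e1]
  have h1 := Real.add_one_le_exp (c*y*(1-l))
  have hy0 : 0 < y := by linarith
  have hcp : 0 < c := by linarith
  have h3 : Real.exp (-(B*K)) ≤ Real.exp (-(c*y)) := by
    apply Real.exp_le_exp.2
    have : c*y ≤ B*K := mul_le_mul hcB hyK hy0.le (by linarith)
    linarith
  have h2 : l * (1 - l) * (c₀ * M^2 * Real.exp (-(B*K))) ≤ l * (1-l) * (c * y^2 * Real.exp (-(c*y))) := by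
    have : 0 ≤ 1 - l := by linarith
    gcongr
  refine h2.trans ?_
  have h4 : l * y * Real.exp (-(c*y)) * (c*y*(1-l)) ≤ l * y * Real.exp (-(c*y)) * (Real.exp (c*y*(1-l)) - 1) := by
    apply mul_le_mul_of_nonneg_left _ (by positivity)
    linarith
  refine le_trans (le_of_eq ?_) h4
  ring

variable {m : ℕ} {d : Fin m → ℝ → ℝ} {a : Fin m → Fin m → ℝ → ℝ} {β c : Fin m → ℝ → ℝ}
  {r μ : Fin m → ℝ} {η₀ L κ B R c₀ : ℝ}

theorem Core.μpos (H : Core d a β c r μ η₀ L κ B R c₀) (i : Fin m) : 0 < μ i := by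
  have h1 := H.slack i 0
  have h2 := H.d0 i 0
  have h3 := H.b0 i 0
  have h4 := H.η₀pos
  have : 0 ≤ β i 0 * (Real.exp (-2) * Real.exp (μ i * r i)) := by positivity
  linarith

theorem keyineq (H : Core d a β c r μ η₀ L κ B R c₀) {M K l t : ℝ} (hM : 0 < M)
    (hl : 0 ≤ l) (hl1 : l ≤ 1) {x y : ℝ → Fin m → ℝ} (i : Fin m)
    (hv : ∀ j, 0 ≤ x t j - l * y t j)
    (h0 : 0 ≤ x (t - r i) i - l * y (t - r i) i)
    (h1 : x (t - r i) i - l * y (t - r i) i ≤ Real.exp (μ i * r i) * (x t i - l * y t i))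
    (hy : M ≤ y (t - r i) i) (hyK : y (t - r i) i ≤ K) :
    η₀ * (x t i - l * y t i) + β i t * (l * (1 - l) * (c₀ * M^2 * Real.exp (-(B*K)))) ≤
      rhs d a β c r i t x - l * rhs d a β c r i t y + μ i * (x t i - l * y t i) := by
  have hcp : 0 < c i t := lt_of_lt_of_le H.c₀pos (H.cc i t)
  have e1 := h_lip hcp (p := l * y (t - r i) i) (q := x (t - r i) i) (by linarith)
  have e2 := h_sub H.c₀pos (H.cc i t) (H.cB i t) hM hy hyK hl hl1
  have e3 : 0 ≤ ∑ j, a i j t * (x t j - l * y t j) :=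
    Finset.sum_nonneg (fun j _ => mul_nonneg (H.a0 i j t) (hv j))
  have e4 : ∑ j, a i j t * (x t j - l * y t j) = ∑ j, a i j t * x t j - l * ∑ j, a i j t * y t j := by
    rw [Finset.mul_sum, ← Finset.sum_sub_distrib]
    exact Finset.sum_congr rfl (fun j _ => by ring)
  rw [e4] at e3
  have hb := H.b0 i t
  have e5 : β i t * (-(Real.exp (-2)) * (Real.exp (μ i * r i) * (x t i - l * y t i))) ≤
      β i t * (-(Real.exp (-2)) * (x (t - r i) i - l * y (t - r i) i)) := by
    apply mul_le_mul_of_nonneg_left _ hb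
    have := Real.exp_pos (-2)
    nlinarith
  have e6 := mul_le_mul_of_nonneg_left e1 hb
  have e7 := mul_le_mul_of_nonneg_left e2 hb
  have e8 := mul_le_mul_of_nonneg_right (H.slack i t) (hv i)
  unfold rhs
  linarith

/-- Exponential comparison. -/
theorem expcomp {v v' P b : ℝ → ℝ} {s t μ G : ℝ} (hst : s ≤ t) (hμ : 0 ≤ μ)
    (hv : ∀ u, s ≤ u → HasDerivAt v (v' u) u) (hP : ∀ u, HasDerivAt P (b u) u)
    (hGb : ∀ u, 0 ≤ G * b u)
    (h : ∀ u ∈ Icc s t, G * b u ≤ v' u + μ * v u) :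
    Real.exp (-(μ*(t-s))) * (v s + G * (P t - P s)) ≤ v t := by
  have hd : ∀ u, s ≤ u → HasDerivAt (fun u => Real.exp (μ*(u-s)) * v u - G * P u)
      (Real.exp (μ*(u-s)) * (v' u + μ * v u) - G * b u) u := fun u hu => by
    have h1 : HasDerivAt (fun u => μ*(u-s)) μ u := by
      simpa using ((hasDerivAt_id u).sub_const s).const_mul μ
    refine ((h1.exp.mul (hv u hu)).sub ((hP u).const_mul G)).congr_deriv ?_
    ring
  have hmono : MonotoneOn (fun u => Real.exp (μ*(u-s)) * v u - G * P u) (Icc s t) := by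
    apply monotoneOn_of_deriv_nonneg (convex_Icc s t)
    · exact fun u hu => (hd u hu.1).continuousAt.continuousWithinAt
    · intro u hu
      rw [interior_Icc] at hu
      exact (hd u hu.1.le).differentiableAt.differentiableWithinAt
    · intro u hu
      rw [interior_Icc] at hu
      rw [(hd u hu.1.le).deriv]
      have h1 := h u ⟨hu.1.le, hu.2.le⟩
      have h2 := hGb u
      have h3 : 1 ≤ Real.exp (μ*(u-s)) :=
        Real.one_le_exp (mul_nonneg hμ (by linarith [hu.1]))
      nlinarith
  have := hmono (left_mem_Icc.2 hst) (right_mem_Icc.2 hst) hst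
  simp only [sub_self, mul_zero, Real.exp_zero, one_mul] at this
  rw [Real.exp_neg]
  rw [inv_mul_le_iff₀ (Real.exp_pos _)]
  linarith

theorem expcomp0 {v v' : ℝ → ℝ} {s t μ : ℝ} (hst : s ≤ t) (hμ : 0 ≤ μ)
    (hv : ∀ u, s ≤ u → HasDerivAt v (v' u) u)
    (h : ∀ u ∈ Icc s t, 0 ≤ v' u + μ * v u) :
    Real.exp (-(μ*(t-s))) * v s ≤ v t := by
  have := expcomp (P := fun _ => 0) (b := fun _ => 0) (G := 0) hst hμ hv
    (fun u => hasDerivAt_const u 0) (by simp) (by simpa using h)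
  simpa using this

end Nicholson

namespace Nicholson

variable {m : ℕ} {d : Fin m → ℝ → ℝ} {a : Fin m → Fin m → ℝ → ℝ} {β c : Fin m → ℝ → ℝ}
  {r μ : Fin m → ℝ} {η₀ L κ B R c₀ : ℝ}

theorem Apx.mono {ε M K t₀ t₁ : ℝ} {x x' : ℝ → Fin m → ℝ}
    (h : Apx d a β c r R ε M K t₀ x x') (ht : t₀ ≤ t₁) : Apx d a β c r R ε M K t₁ x x' where
  der i t h1 := h.der i t (by linarith)
  cont i := (h.cont i).mono (Ici_subset_Ici.2 ht)
  err i t h1 := h.err i t (by linarith)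
  lb i t h1 := h.lb i t (by linarith)
  ub i t h1 := h.ub i t (by linarith)

/-- The order relation `l y ≤ x` on the segment `[t-R,t]`. -/
def EOrd (μ : Fin m → ℝ) (R : ℝ) (x x' y y' : ℝ → Fin m → ℝ) (l t : ℝ) : Prop :=
  ∀ i, ∀ u ∈ Icc (t - R) t, 0 ≤ x u i - l * y u i ∧
    0 ≤ (x' u i - l * y' u i) + μ i * (x u i - l * y u i)

/-- If `e^{μ u} v` is nondecreasing on `[t-R,t]`, the pointwise derivative estimate with errors. -/
theorem stepineq (H : Core d a β c r μ η₀ L κ B R c₀) {ε M K l t₀ t : ℝ} (hM : 0 < M)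
    (hl : 0 ≤ l) (hl1 : l ≤ 1) {x x' y y' : ℝ → Fin m → ℝ}
    (hx : Apx d a β c r R ε M K t₀ x x') (hy : Apx d a β c r R ε M K t₀ y y')
    (ht : t₀ + R ≤ t) (i : Fin m)
    (hv : ∀ j, 0 ≤ x t j - l * y t j)
    (h0 : ∀ u ∈ Icc (t - R) t, 0 ≤ x u i - l * y u i)
    (hV : ∀ u ∈ Icc (t - R) t, 0 ≤ (x' u i - l * y' u i) + μ i * (x u i - l * y u i)) :
    η₀ * (x t i - l * y t i) + β i t * (l * (1 - l) * (c₀ * M^2 * Real.exp (-(B*K)))) - 2 * ε ≤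
      (x' t i - l * y' t i) + μ i * (x t i - l * y t i) := by
  have hR := H.Rpos
  have hr := H.rpos i
  have hrR := H.rle i
  have hder : ∀ u, t - r i ≤ u → HasDerivAt (fun u => x u i - l * y u i) (x' u i - l * y' u i) u :=
    fun u hu => (hx.der i u (by linarith)).sub ((hy.der i u (by linarith)).const_mul l)
  have e1 := expcomp0 (t := t) (by linarith) (H.μpos i).le hder
    (fun u hu => hV u ⟨by linarith [hu.1], hu.2⟩)
  rw [show t - (t - r i) = r i by ring, Real.exp_neg, inv_mul_le_iff₀ (Real.exp_pos _)] at e1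
  have e2 := keyineq (K := K) H hM hl hl1 i hv (h0 (t - r i) ⟨by linarith, by linarith⟩) e1
    (hy.lb i _ (by linarith)) (hy.ub i _ (by linarith))
  have e3 := abs_le.1 (hx.err i t (by linarith))
  have e4 := abs_le.1 (hy.err i t (by linarith))
  have e5 : l * (y' t i - rhs d a β c r i t y) ≤ ε := by
    have : 0 ≤ ε := le_trans (abs_nonneg _) (hx.err i t (by linarith))
    nlinarith
  linarith

theorem contin (H : Core d a β c r μ η₀ L κ B R c₀) {ε M K l t₀ t₁ T θ : ℝ} (hM : 0 < M)
    (hε : 0 < ε)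
    (hl : 0 ≤ l) (hl1 : l ≤ 1) {x x' y y' : ℝ → Fin m → ℝ}
    (hx : Apx d a β c r R ε M K t₀ x x') (hy : Apx d a β c r R ε M K t₀ y y')
    (ht : t₀ + R ≤ t₁) (hT : 0 ≤ T) (hθ : 0 ≤ θ)
    (hbig : 4 * ε ≤ η₀ * (Real.exp (-(B*T)) * θ))
    (h0 : ∀ i, ∀ u ∈ Icc (t₁ - R) t₁, θ ≤ x u i - l * y u i)
    (hV : ∀ i, ∀ u ∈ Icc (t₁ - R) t₁, 0 < (x' u i - l * y' u i) + μ i * (x u i - l * y u i)) :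
    ∀ i, ∀ u ∈ Icc t₁ (t₁+T), Real.exp (-(B*T)) * θ ≤ x u i - l * y u i ∧
      (η₀/2) * (x u i - l * y u i) + β i u * (l * (1 - l) * (c₀ * M^2 * Real.exp (-(B*K)))) ≤
      (x' u i - l * y' u i) + μ i * (x u i - l * y u i) := by
  have hR := H.Rpos
  have hder : ∀ i u, t₁ ≤ u → HasDerivAt (fun u => x u i - l * y u i) (x' u i - l * y' u i) u :=
    fun i u hu => (hx.der i u (by linarith)).sub ((hy.der i u (by linarith)).const_mul l)
  -- intermediate claim: positivity up to `t` gives the estimates at `t`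
  have main : ∀ t ∈ Icc t₁ (t₁+T), (∀ i, ∀ u ∈ Icc t₁ t,
      0 ≤ (x' u i - l * y' u i) + μ i * (x u i - l * y u i)) →
      ∀ i, Real.exp (-(B*T)) * θ ≤ x t i - l * y t i ∧
      (η₀/2) * (x t i - l * y t i) + β i t * (l * (1 - l) * (c₀ * M^2 * Real.exp (-(B*K)))) ≤
      (x' t i - l * y' t i) + μ i * (x t i - l * y t i) := by
    intro t htt hpos
    have hlow : ∀ i, ∀ u ∈ Icc t₁ t, Real.exp (-(B*T)) * θ ≤ x u i - l * y u i := fun i u hu => by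
      have e1 := expcomp0 (t := u) hu.1 (H.μpos i).le (hder i)
        (fun w hw => hpos i w ⟨hw.1, hw.2.trans hu.2⟩)
      refine le_trans ?_ e1
      have e2 := h0 i t₁ ⟨by linarith, le_rfl⟩
      apply mul_le_mul _ e2 hθ (Real.exp_pos _).le
      apply Real.exp_le_exp.2
      have h3 : μ i * (u - t₁) ≤ B * T :=
        mul_le_mul (H.μle i) (by linarith [hu.2, htt.2]) (by linarith [hu.1]) H.Bpos.le
      linarith
    have hpT : 0 ≤ Real.exp (-(B*T)) * θ := by positivity
    intro i
    have hself := hlow i t ⟨htt.1, le_rfl⟩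
    refine ⟨hself, ?_⟩
    have hst := stepineq H hM hl hl1 hx hy (t := t) (by linarith [htt.1]) i
      (fun j => hpT.trans (hlow j t ⟨htt.1, le_rfl⟩))
      (fun u hu => by
        by_cases h : u ≤ t₁
        · exact hθ.trans (h0 i u ⟨by linarith [hu.1, htt.1], h⟩)
        · exact hpT.trans (hlow i u ⟨by linarith, hu.2⟩))
      (fun u hu => by
        by_cases h : u ≤ t₁
        · exact (hV i u ⟨by linarith [hu.1, htt.1], h⟩).le
        · exact hpos i u ⟨by linarith, hu.2⟩)
    have := mul_le_mul_of_nonneg_left hself H.η₀pos.le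
    linarith
  -- no bad time
  have good : ∀ i, ∀ u ∈ Icc t₁ (t₁+T), 0 ≤ (x' u i - l * y' u i) + μ i * (x u i - l * y u i) := by
    by_contra hcon
    push Not at hcon
    obtain ⟨i₀, u₀, hu₀, hneg⟩ := hcon
    have hcont : ∀ i, ContinuousOn (fun u => (x' u i - l * y' u i) + μ i * (x u i - l * y u i))
        (Icc t₁ (t₁+T)) := fun i => by
      have hsub : Icc t₁ (t₁+T) ⊆ Ici t₀ := fun u hu => by
        have := hu.1
        show t₀ ≤ u
        linarith
      refine ((((hx.cont i).mono hsub).sub (((hy.cont i).mono hsub).const_mul l))).add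
        (ContinuousOn.const_mul ?_ _)
      exact fun u hu => (hder i u hu.1).continuousAt.continuousWithinAt
    let S : Set ℝ := ⋃ i, (Icc t₁ (t₁+T) ∩
      (fun u => (x' u i - l * y' u i) + μ i * (x u i - l * y u i)) ⁻¹' Iic 0)
    have hScl : IsCompact S := by
      apply isCompact_iUnion
      intro i
      exact isCompact_Icc.of_isClosed_subset
        ((hcont i).preimage_isClosed_of_isClosed isClosed_Icc isClosed_Iic) inter_subset_left
    have hSne : S.Nonempty := ⟨u₀, mem_iUnion.2 ⟨i₀, hu₀, hneg.le⟩⟩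
    obtain ⟨t, htS, hleast⟩ := hScl.exists_isLeast hSne
    obtain ⟨i, hti, hle⟩ := mem_iUnion.1 htS
    have hbefore : ∀ j, ∀ u ∈ Icc t₁ t, u < t →
        0 < (x' u j - l * y' u j) + μ j * (x u j - l * y u j) := fun j u hu hut => by
      by_contra hn
      push Not at hn
      have : u ∈ S := mem_iUnion.2 ⟨j, ⟨hu.1, hu.2.trans hti.2⟩, hn⟩
      linarith [hleast this]
    have hup : ∀ j, ∀ u ∈ Icc t₁ t, 0 ≤ (x' u j - l * y' u j) + μ j * (x u j - l * y u j) := by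
      intro j u hu
      rcases lt_or_eq_of_le hu.2 with h | h
      · exact (hbefore j u hu h).le
      · subst h
        rcases eq_or_lt_of_le hu.1 with h' | h'
        · rw [← h']; exact (hV j t₁ ⟨by linarith, le_rfl⟩).le
        · have hc : ContinuousWithinAt (fun u => (x' u j - l * y' u j) + μ j * (x u j - l * y u j))
              (Ioo t₁ u) u := ((hcont j) u hti).mono
                (fun w hw => ⟨hw.1.le, hw.2.le.trans hti.2⟩)
          haveI : (𝓝[Ioo t₁ u] u).NeBot := by
            rw [nhdsWithin_Ioo_eq_nhdsLT h']; infer_instance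
          exact ge_of_tendsto hc (by
            filter_upwards [self_mem_nhdsWithin] with w hw
            exact (hbefore j w ⟨hw.1.le, hw.2.le⟩ hw.2).le)
    have := main t hti hup i
    have hb := H.b0 i t
    have hg : 0 ≤ β i t * (l * (1 - l) * (c₀ * M^2 * Real.exp (-(B*K)))) := by
      have := H.c₀pos
      have : 0 ≤ 1 - l := by linarith
      positivity
    have hle' : (x' t i - l * y' t i) + μ i * (x t i - l * y t i) ≤ 0 := hle
    have h3 := mul_le_mul_of_nonneg_left this.1 H.η₀pos.le
    linarith [this.2]
  intro i u hu
  exact main u hu (fun j w hw => good j w ⟨hw.1, hw.2.trans hu.2⟩) i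

end Nicholson

namespace Nicholson

variable {m : ℕ} {d : Fin m → ℝ → ℝ} {a : Fin m → Fin m → ℝ → ℝ} {β c : Fin m → ℝ → ℝ}
  {r μ : Fin m → ℝ} {η₀ L κ B R c₀ : ℝ}

theorem ybd (H : Core d a β c r μ η₀ L κ B R c₀) {ε M K t₀ : ℝ} (hM : 0 < M)
    (hε : ε ≤ η₀ * M / 2) (hε1 : ε ≤ 1) {y y' : ℝ → Fin m → ℝ}
    (hy : Apx d a β c r R ε M K t₀ y y') (i : Fin m) (t : ℝ) (ht : t₀ ≤ t) :
    η₀ * M / 2 ≤ y' t i + μ i * y t i ∧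
      y' t i + μ i * y t i ≤ m * (B * K) + B * K + B * K + 1 := by
  have hR := H.Rpos
  have hr := H.rpos i
  have hrR := H.rle i
  have e := abs_le.1 (hy.err i t ht)
  have y1 := fun j => hy.lb j t (by linarith)
  have y2 := fun j => hy.ub j t (by linarith)
  have z1 := hy.lb i (t - r i) (by linarith)
  have z2 := hy.ub i (t - r i) (by linarith)
  have hb := H.b0 i t
  have hB := H.Bpos
  have s0 : 0 ≤ ∑ j, a i j t * y t j :=
    Finset.sum_nonneg (fun j _ => mul_nonneg (H.a0 i j t) (by linarith [y1 j]))
  have s1 : ∑ j, a i j t * y t j ≤ m * (B * K) := by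
    calc _ ≤ ∑ j : Fin m, B * K := Finset.sum_le_sum (fun j _ =>
            mul_le_mul (H.aB i j t) (y2 j) (by linarith [y1 j]) hB.le)
      _ = _ := by simp
  have hz0 : 0 < y (t - r i) i := by linarith
  have hcp : 0 < c i t := lt_of_lt_of_le H.c₀pos (H.cc i t)
  have b0 : 0 ≤ β i t * y (t - r i) i * Real.exp (-(c i t * y (t - r i) i)) := by positivity
  have b1 : β i t * y (t - r i) i * Real.exp (-(c i t * y (t - r i) i)) ≤ B * K := by
    have h1 : Real.exp (-(c i t * y (t - r i) i)) ≤ 1 := by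
      apply Real.exp_le_one_iff.2
      have : 0 ≤ c i t * y (t - r i) i := by positivity
      linarith
    have h2 : β i t * y (t - r i) i ≤ B * K := mul_le_mul (H.bB i t) z2 hz0.le hB.le
    have h3 : 0 ≤ β i t * y (t - r i) i := by positivity
    calc _ ≤ β i t * y (t - r i) i * 1 := by gcongr
      _ ≤ _ := by linarith
  have hsl := H.slack i t
  have hsl2 : 0 ≤ β i t * (Real.exp (-2) * Real.exp (μ i * r i)) := by positivity
  have m1 : η₀ * M ≤ (μ i - d i t) * y t i :=
    mul_le_mul (by linarith) (y1 i) hM.le (by linarith [H.η₀pos])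
  have m2 : μ i * y t i ≤ B * K := mul_le_mul (H.μle i) (y2 i) (by linarith [y1 i]) hB.le
  have m3 : 0 ≤ d i t * y t i := mul_nonneg (H.d0 i t) (by linarith [y1 i])
  unfold rhs at e
  constructor <;> linarith [e.1, e.2]

theorem EOrd.lower {l l' t : ℝ} {x x' y y' : ℝ → Fin m → ℝ} (h : EOrd μ R x x' y y' l t)
    (hl : l' ≤ l) (hy : ∀ i, ∀ u ∈ Icc (t - R) t, 0 ≤ y u i ∧ 0 ≤ y' u i + μ i * y u i) :
    EOrd μ R x x' y y' l' t := by
  intro i u hu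
  have h1 := h i u hu
  have h2 := hy i u hu
  have h3 := mul_nonneg (sub_nonneg.2 hl) h2.1
  have h4 := mul_nonneg (sub_nonneg.2 hl) h2.2
  constructor <;> nlinarith [h1.1, h1.2]

theorem cycle (H : Core d a β c r μ η₀ L κ B R c₀) {ε M K t₀ t₁ l l₀ η γ Δ G C : ℝ} (hM : 0 < M)
    (hε0 : 0 < ε) (hε : ε ≤ η₀ * M / 2) (hε1 : ε ≤ 1) {x x' y y' : ℝ → Fin m → ℝ}
    (hx : Apx d a β c r R ε M K t₀ x x') (hy : Apx d a β c r R ε M K t₀ y y')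
    (ht : t₀ + R ≤ t₁) (hl₀ : 0 < l₀) (hη : 0 < η) (hl : l₀ ≤ l) (hl1 : l ≤ 1 - η)
    (hC0 : 0 < C) (hC : η₀ * (Real.exp (-(B*(L+R))) * (C * M)) = 4)
    (hG : G = Real.exp (-(B*(L+R))) * ((l₀/2 * η * (c₀ * M^2 * Real.exp (-(B*K)))) * κ))
    (hG0 : 0 < G)
    (hΔ : 0 < Δ) (hΔK : Δ * K ≤ 1) (hΔK' : Δ * (m * (B * K) + B * K + B * K + 1) ≤ η₀/2)
    (hγ : 2 * γ = Δ * G) (hCε : C * ε ≤ γ) (hCε' : C * ε ≤ l₀/2)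
    (h : EOrd μ R x x' y y' l t₁) :
    EOrd μ R x x' y y' (min (l + γ) (1 - η)) (t₁ + (L + R)) := by
  have hR := H.Rpos
  have hL := H.Lpos
  set l' := l - C * ε with hl'
  have hCpos : 0 < C * ε := by positivity
  have hl'0 : l₀/2 ≤ l' := by linarith
  have hl'1 : l' ≤ 1 - η := by linarith
  have hyb : ∀ i u, t₁ - R ≤ u → M ≤ y u i ∧ y u i ≤ K ∧ η₀ * M / 2 ≤ y' u i + μ i * y u i ∧
      y' u i + μ i * y u i ≤ m * (B * K) + B * K + B * K + 1 := fun i u hu =>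
    ⟨hy.lb i u (by linarith), hy.ub i u (by linarith), ybd H hM hε hε1 hy i u (by linarith)⟩
  have hc1 := contin H (T := L + R) (θ := C * ε * M) (l := l') hM hε0 (by linarith) (by linarith)
    hx hy ht (by linarith) (by positivity)
    (by
      have : η₀ * (Real.exp (-(B*(L+R))) * (C * ε * M)) = 4 * ε := by rw [← hC]; ring
      linarith)
    (fun i u hu => by
      have h1 := (h i u hu).1
      have h2 := (hyb i u hu.1).1
      have h3 := mul_le_mul_of_nonneg_left h2 hCpos.le
      rw [hl']; linarith)
    (fun i u hu => by
      have h1 := (h i u hu).2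
      have h2 := (hyb i u hu.1).2.2.1
      have h3 := mul_le_mul_of_nonneg_left h2 hCpos.le
      have h4 : 0 < C * ε * (η₀ * M / 2) := by have := H.η₀pos; positivity
      rw [hl']; linarith)
  set g := l' * (1 - l') * (c₀ * M^2 * Real.exp (-(B*K))) with hg
  have hgpos : l₀/2 * η * (c₀ * M^2 * Real.exp (-(B*K))) ≤ g := by
    have := H.c₀pos
    rw [hg]
    apply mul_le_mul_of_nonneg_right _ (by positivity)
    exact mul_le_mul hl'0 (by linarith) hη.le (by linarith)
  have hg0 : 0 ≤ g := le_trans (by have := H.c₀pos; positivity) hgpos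
  have hv : ∀ i, ∀ u ∈ Icc (t₁ + L) (t₁ + (L + R)), G ≤ x u i - l' * y u i := by
    intro i u hu
    have hder : ∀ u, t₁ ≤ u → HasDerivAt (fun u => x u i - l' * y u i) (x' u i - l' * y' u i) u :=
      fun u hu => (hx.der i u (by linarith)).sub ((hy.der i u (by linarith)).const_mul l')
    have hint : ∀ p q, IntervalIntegrable (β i) volume p q :=
      fun p q => (H.bcont i).intervalIntegrable p q
    have e0 : 0 ≤ Real.exp (-(B*(L+R))) * (C * ε * M) := by positivity
    have e1 := expcomp (t := u) (P := fun w => ∫ z in t₁..w, β i z) (b := β i) (G := g)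
      (by linarith [hu.1]) (H.μpos i).le hder
      (fun w => intervalIntegral.integral_hasDerivAt_right (hint _ _)
        ((H.bcont i).stronglyMeasurableAtFilter _ _) (H.bcont i).continuousAt)
      (fun w => mul_nonneg hg0 (H.b0 i w))
      (fun w hw => by
        have h1 := hc1 i w ⟨hw.1, hw.2.trans hu.2⟩
        have h2 : 0 ≤ (η₀/2) * (x w i - l' * y w i) :=
          mul_nonneg (by linarith [H.η₀pos]) (e0.trans h1.1)
        linarith [h1.2])
    refine le_trans ?_ e1
    have e2 : κ ≤ ∫ z in t₁..u, β i z := by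
      refine (H.window i t₁).trans ?_
      rw [← intervalIntegral.integral_add_adjacent_intervals (hint t₁ (t₁+L)) (hint (t₁+L) u)]
      have := intervalIntegral.integral_nonneg (μ := volume) hu.1 (fun w _ => H.b0 i w)
      linarith
    have e3 := hc1 i t₁ ⟨le_rfl, by linarith⟩
    rw [hG]
    apply mul_le_mul _ _ _ (Real.exp_pos _).le
    · apply Real.exp_le_exp.2
      have : μ i * (u - t₁) ≤ B * (L+R) :=
        mul_le_mul (H.μle i) (by linarith [hu.2]) (by linarith [hu.1]) H.Bpos.le
      linarith
    · have : l₀/2 * η * (c₀ * M^2 * Real.exp (-(B*K))) * κ ≤ g * ∫ z in t₁..u, β i z :=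
        mul_le_mul hgpos e2 H.κpos.le hg0
      simp only [intervalIntegral.integral_same, sub_zero]
      linarith [e3.1]
    · have := H.c₀pos
      have := H.κpos
      positivity
  have hfin : EOrd μ R x x' y y' (l' + Δ * G) (t₁ + (L + R)) := by
    intro i u hu
    have hu' : u ∈ Icc (t₁ + L) (t₁ + (L + R)) := ⟨by linarith [hu.1], hu.2⟩
    have h1 := hv i u hu'
    have h2 := hyb i u (by linarith [hu'.1])
    have h3 := (hc1 i u ⟨by linarith [hu'.1], hu.2⟩).2
    have h4 : 0 ≤ β i u * g := mul_nonneg (H.b0 i u) hg0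
    have h5 : (Δ * G) * y u i ≤ (Δ * G) * K :=
      mul_le_mul_of_nonneg_left h2.2.1 (by positivity)
    have h6 : (Δ * G) * (y' u i + μ i * y u i) ≤ (Δ * G) * (m * (B * K) + B * K + B * K + 1) :=
      mul_le_mul_of_nonneg_left h2.2.2.2 (by positivity)
    have h7 : G * (Δ * K) ≤ G * 1 := mul_le_mul_of_nonneg_left hΔK hG0.le
    have h8 := mul_le_mul_of_nonneg_left hΔK' hG0.le
    have h9 : η₀/2 * G ≤ (η₀/2) * (x u i - l' * y u i) :=
      mul_le_mul_of_nonneg_left h1 (by linarith [H.η₀pos])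
    constructor <;> linarith
  refine hfin.lower ?_ ?_
  · refine (min_le_left _ _).trans ?_
    linarith
  · intro i u hu
    have h2 := hyb i u (by linarith [hu.1])
    have := H.η₀pos
    have h3 : 0 ≤ η₀ * M / 2 := by positivity
    exact ⟨by linarith [h2.1], by linarith [h2.2.2.1]⟩

theorem robust (H : Core d a β c r μ η₀ L κ B R c₀) {M K η : ℝ} (hM : 0 < M) (hMK : M ≤ K)
    (hη : 0 < η) (hη1 : η ≤ 1/2) :
    ∃ ε > 0, ∃ T, ∀ (x x' y y' : ℝ → Fin m → ℝ) (t₀ : ℝ), Apx d a β c r R ε M K t₀ x x' →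
      Apx d a β c r R ε M K t₀ y y' → ∀ t, t₀ + T ≤ t → ∀ i, (1 - η) * y t i ≤ x t i := by
  have hK : 0 < K := by linarith
  have hη₀ := H.η₀pos
  have hB := H.Bpos
  have hR := H.Rpos
  have hL := H.Lpos
  have hκ := H.κpos
  have hc₀ := H.c₀pos
  set K' : ℝ := m * (B * K) + B * K + B * K + 1 with hK'
  have hK'0 : 0 < K' := by positivity
  set E := Real.exp (-(B*(L+R))) with hE
  have hE0 : 0 < E := Real.exp_pos _
  obtain ⟨l₀, hl₀, hl₀1, hl₀2, hl₀3⟩ : ∃ l₀ : ℝ, 0 < l₀ ∧ l₀ ≤ 1/2 ∧ l₀ * K ≤ M ∧ l₀ * K' ≤ η₀ * M / 2 := by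
    refine ⟨min (1/2) (min (M/K) (η₀ * M / 2 / K')), by positivity, min_le_left _ _, ?_, ?_⟩
    · rw [← le_div_iff₀ hK]; exact (min_le_right _ _).trans (min_le_left _ _)
    · rw [← le_div_iff₀ hK'0]; exact (min_le_right _ _).trans (min_le_right _ _)
  obtain ⟨Δ, hΔ, hΔK, hΔK'⟩ : ∃ Δ : ℝ, 0 < Δ ∧ Δ * K ≤ 1 ∧ Δ * K' ≤ η₀/2 := by
    refine ⟨min (1/K) (η₀/2/K'), by positivity, ?_, ?_⟩
    · rw [← le_div_iff₀ hK]; exact (min_le_left _ _)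
    · rw [← le_div_iff₀ hK'0]; exact (min_le_right _ _)
  set G := E * ((l₀/2 * η * (c₀ * M^2 * Real.exp (-(B*K)))) * κ) with hG
  have hG0 : 0 < G := by positivity
  obtain ⟨γ, hγ⟩ : ∃ γ, 2 * γ = Δ * G := ⟨Δ * G / 2, by ring⟩
  have hγ0 : 0 < γ := by have : 0 < Δ * G := by positivity
                         linarith
  obtain ⟨C, hC0, hC⟩ : ∃ C : ℝ, 0 < C ∧ η₀ * (E * (C * M)) = 4 :=
    ⟨4 / (η₀ * E * M), by positivity, by field_simp⟩
  obtain ⟨ε, hε0, h1, h2, h3, h4⟩ : ∃ ε : ℝ, 0 < ε ∧ ε ≤ η₀ * M / 2 ∧ ε ≤ 1 ∧ C * ε ≤ γ ∧ C * ε ≤ l₀/2 := by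
    refine ⟨min (min (η₀ * M / 2) 1) (min (γ/C) (l₀/2/C)), by positivity,
      (min_le_left _ _).trans (min_le_left _ _), (min_le_left _ _).trans (min_le_right _ _), ?_, ?_⟩
    · rw [mul_comm, ← le_div_iff₀ hC0]; exact (min_le_right _ _).trans (min_le_left _ _)
    · rw [mul_comm, ← le_div_iff₀ hC0]; exact (min_le_right _ _).trans (min_le_right _ _)
  obtain ⟨N, hN⟩ := exists_nat_ge (1/γ)
  refine ⟨ε, hε0, R + N * (L+R), fun x x' y y' t₀ hx hy t ht i => ?_⟩
  have key : ∀ (n : ℕ) (t₁ : ℝ), t₀ + R ≤ t₁ →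
      EOrd μ R x x' y y' (min (l₀ + n * γ) (1 - η)) (t₁ + n * (L+R)) := by
    intro n
    induction n with
    | zero =>
      intro t₁ ht₁
      have : min (l₀ + (0:ℕ) * γ) (1 - η) = l₀ := by
        simp; linarith
      rw [this]
      intro i u hu
      simp only [Nat.cast_zero, zero_mul, add_zero] at hu
      have b1 := ybd H hM h1 h2 hx i u (by linarith [hu.1])
      have b2 := ybd H hM h1 h2 hy i u (by linarith [hu.1])
      have b3 := hx.lb i u (by linarith [hu.1])
      have b4 := hy.ub i u (by linarith [hu.1])
      have b5 := mul_le_mul_of_nonneg_left b4 hl₀.le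
      have b6 := mul_le_mul_of_nonneg_left b2.2 hl₀.le
      rw [← hK'] at b6
      constructor <;> linarith [b1.1]
    | succ n ih =>
      intro t₁ ht₁
      have e := cycle H hM hε0 h1 h2 hx hy (t₁ := t₁ + n * (L+R)) (l := min (l₀ + n * γ) (1 - η))
        (by have : 0 ≤ (n:ℝ) * (L+R) := by positivity
            linarith)
        hl₀ hη (le_min (by have : 0 ≤ (n:ℝ) * γ := by positivity
                           linarith) (by linarith)) (min_le_right _ _) hC0 hC hG hG0 hΔ hΔK hΔK' hγ h3 h4 (ih t₁ ht₁)
      convert e using 1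
      · push_cast
        rcases le_total (l₀ + n * γ) (1 - η) with h | h
        · rw [min_eq_left h]; ring_nf
        · rw [min_eq_right h, min_eq_right (by linarith), min_eq_right (by linarith)]
      · push_cast; ring
  have hfin := key N (t - N * (L+R)) (by linarith)
  have hmin : min (l₀ + N * γ) (1 - η) = 1 - η := by
    apply min_eq_right
    rw [div_le_iff₀ hγ0] at hN
    linarith
  rw [hmin] at hfin
  have := (hfin i t ⟨by linarith, by linarith⟩).1
  linarith

theorem robust' (H : Core d a β c r μ η₀ L κ B R c₀) {M K e : ℝ} (hM : 0 < M) (hMK : M ≤ K)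
    (he : 0 < e) :
    ∃ ε > 0, ∃ T, ∀ (x x' y y' : ℝ → Fin m → ℝ) (t₀ : ℝ), Apx d a β c r R ε M K t₀ x x' →
      Apx d a β c r R ε M K t₀ y y' → ∀ t, t₀ + T ≤ t → t₀ ≤ t → ∀ i, |x t i - y t i| < e := by
  have hK : 0 < K := by linarith
  obtain ⟨ε, hε, T, h⟩ := robust H hM hMK (η := min (1/2) (e/(2*K))) (by positivity) (min_le_left _ _)
  refine ⟨ε, hε, T, fun x x' y y' t₀ hx hy t ht ht' i => ?_⟩
  have h1 := h x x' y y' t₀ hx hy t ht i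
  have h2 := h y y' x x' t₀ hy hx t ht i
  have hR := H.Rpos
  have a1 := hx.ub i t (by linarith)
  have a2 := hy.ub i t (by linarith)
  have a3 := hx.lb i t (by linarith)
  have a4 := hy.lb i t (by linarith)
  set η := min (1/2) (e/(2*K))
  have h3 : η * (2*K) ≤ e := by
    rw [← le_div_iff₀ (by positivity)]; exact min_le_right _ _
  have h0 : 0 < η := by positivity
  have b1 := mul_le_mul_of_nonneg_left a1 h0.le
  have b2 := mul_le_mul_of_nonneg_left a2 h0.le
  have b3 : 0 < η * K := by positivity
  rw [abs_lt]; constructor <;> linarith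

end Nicholson

namespace Nicholson

variable {m : ℕ} {d : Fin m → ℝ → ℝ} {a : Fin m → Fin m → ℝ → ℝ} {β c : Fin m → ℝ → ℝ}
  {r μ : Fin m → ℝ} {η₀ L κ B R c₀ : ℝ}

theorem fin_lb {ι : Type*} [Finite ι] (f : ι → ℝ) (h : ∀ i, 0 < f i) : ∃ k > 0, ∀ i, k ≤ f i := by
  rcases isEmpty_or_nonempty ι with h0 | h0
  · exact ⟨1, one_pos, fun i => h0.elim i⟩
  · obtain ⟨i, hi⟩ := Finite.exists_min f
    exact ⟨f i, h i, hi⟩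

theorem fin_ub {ι : Type*} [Finite ι] (f : ι → ℝ) : ∃ k > 0, ∀ i, f i ≤ k := by
  rcases isEmpty_or_nonempty ι with h0 | h0
  · exact ⟨1, one_pos, fun i => h0.elim i⟩
  · obtain ⟨i, hi⟩ := Finite.exists_max f
    exact ⟨max (f i) 1, by positivity, fun j => (hi j).trans (le_max_left _ _)⟩

/-- All coefficients as one family. -/
def coefs (d : Fin m → ℝ → ℝ) (a : Fin m → Fin m → ℝ → ℝ) (β c : Fin m → ℝ → ℝ) :
    (Fin m ⊕ (Fin m × Fin m) ⊕ Fin m ⊕ Fin m) → ℝ → ℝ :=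
  Sum.elim d (Sum.elim (fun p => a p.1 p.2) (Sum.elim β c))

theorem coefs_AP (hN : NicholsonHyps m d a β c) : ∀ k, AlmostPeriodic (coefs d a β c k) := by
  rintro (k | k | k | k)
  · exact hN.1 k
  · exact hN.2.1 k.1 k.2
  · exact hN.2.2.1 k
  · exact hN.2.2.2.1 k

theorem coefs_common (hN : NicholsonHyps m d a β c) {ε : ℝ} (hε : 0 < ε) :
    ∃ L > 0, ∀ p : ℝ, ∃ s ∈ Icc p (p + L), ∀ t, (∀ i, |d i (t+s) - d i t| < ε) ∧
      (∀ i j, |a i j (t+s) - a i j t| < ε) ∧ (∀ i, |β i (t+s) - β i t| < ε) ∧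
      (∀ i, |c i (t+s) - c i t| < ε) := by
  obtain ⟨L, hL, h⟩ := AP_common (coefs_AP hN) hε
  refine ⟨L, hL, fun p => ?_⟩
  obtain ⟨s, hs, hk⟩ := h p
  exact ⟨s, hs, fun t => ⟨fun i => hk (Sum.inl i) t, fun i j => hk (Sum.inr (Sum.inl (i,j))) t,
    fun i => hk (Sum.inr (Sum.inr (Sum.inl i))) t, fun i => hk (Sum.inr (Sum.inr (Sum.inr i))) t⟩⟩

theorem le_supR {f : ℝ → ℝ} (hf : AlmostPeriodic f) (t : ℝ) : f t ≤ supR f := by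
  obtain ⟨B, hB⟩ := AP_bdd hf
  exact le_csSup ⟨B, by rintro _ ⟨u, rfl⟩; exact (abs_le.1 (hB u)).2⟩ ⟨t, rfl⟩

theorem exists_core (hr : ∀ i, 0 < r i) (hN : NicholsonHyps m d a β c)
    (hcond : ∀ i, r i * supR (β i) * Real.exp (supR (d i) * r i) < Real.exp 1) :
    ∃ η₀ L κ B R c₀, Core d a β c r (muN r β) η₀ L κ B R c₀ := by
  have hAP := coefs_AP hN
  obtain ⟨hd, ha, hβ, hc, ⟨d₀, hd₀, hdd⟩, ha0, _, hβ0, ⟨c₀, hc₀, hcc⟩, _⟩ := hN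
  choose Bk hBk using fun k => AP_bdd (hAP k)
  obtain ⟨B1, hB1, hB1'⟩ := fin_ub Bk
  obtain ⟨B2, hB2, hB2'⟩ := fin_ub (muN r β)
  have hbound : ∀ k t, coefs d a β c k t ≤ max B1 B2 := fun k t =>
    ((abs_le.1 (hBk k t)).2.trans (hB1' k)).trans (le_max_left _ _)
  obtain ⟨R, hR, hrR⟩ := fin_ub r
  choose Li hLi κi hκi hw using fun i => AP_window (hβ i) (fun t => (hβ0 i t).le) (hβ0 i 0)
  obtain ⟨L, hL, hLL⟩ := fin_ub Li
  obtain ⟨κ, hκ, hκκ⟩ := fin_lb κi hκi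
  have hsup : ∀ i, 0 < supR (β i) := fun i => (hβ0 i 0).trans_le (le_supR (hβ i) 0)
  have hexp : ∀ i, Real.exp (muN r β i * r i) = Real.exp 2 / (r i * supR (β i)) := fun i => by
    have := hr i
    have := hsup i
    have e : muN r β i * r i = Real.log (Real.exp 2 / (r i * supR (β i))) := by
      unfold muN; field_simp
    rw [e, Real.exp_log (by positivity)]
  have hη : ∀ i, 0 < muN r β i - supR (d i) - 1 / r i := fun i => by
    have h1 := hr i
    have h2 := hsup i
    have h3 := hcond i
    have h4 : Real.exp (1 + supR (d i) * r i) < Real.exp (muN r β i * r i) := by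
      rw [hexp, lt_div_iff₀ (by positivity), Real.exp_add,
        show (2:ℝ) = 1 + 1 by norm_num, Real.exp_add]
      have := mul_lt_mul_of_pos_left h3 (Real.exp_pos 1)
      linarith
    rw [Real.exp_lt_exp] at h4
    have h5 : 0 < (muN r β i - supR (d i) - 1 / r i) * r i := by
      have : 1 / r i * r i = 1 := by field_simp
      nlinarith
    exact pos_of_mul_pos_left h5 h1.le
  obtain ⟨η₀, hη₀, hη₀'⟩ := fin_lb _ hη
  refine ⟨η₀, L, κ, max B1 B2, R, c₀, ?_⟩
  refine ⟨hη₀, hL, hκ, by positivity, hR, hc₀, hr, hrR, fun i => (hB2' i).trans (le_max_right _ _),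
    fun i t => hd₀.le.trans (hdd i t), fun i t => hbound (Sum.inl i) t, ha0,
    fun i j t => hbound (Sum.inr (Sum.inl (i,j))) t, fun i t => (hβ0 i t).le,
    fun i t => hbound (Sum.inr (Sum.inr (Sum.inl i))) t,
    fun i t => hbound (Sum.inr (Sum.inr (Sum.inr i))) t, hcc, ?_, fun i => (hβ i).1, ?_⟩
  · intro i t
    rw [hexp]
    have h1 := hr i
    have h2 := hsup i
    have e : Real.exp (-2) * (Real.exp 2 / (r i * supR (β i))) = 1 / (r i * supR (β i)) := by
      rw [Real.exp_neg]; field_simp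
    rw [e]
    have h3 : β i t * (1 / (r i * supR (β i))) ≤ 1 / r i := by
      have := le_supR (hβ i) t
      calc _ ≤ supR (β i) * (1 / (r i * supR (β i))) := by gcongr
        _ = _ := by field_simp
    linarith [hη₀' i, le_supR (hd i) t]
  · intro i t
    refine (hκκ i).trans ((hw i t).trans ?_)
    have hint : ∀ p q, IntervalIntegrable (β i) volume p q :=
      fun p q => ((hβ i).1).intervalIntegrable p q
    rw [← intervalIntegral.integral_add_adjacent_intervals (hint t (t + Li i)) (hint _ (t+L))]
    have := intervalIntegral.integral_nonneg (μ := volume) (a := t + Li i) (b := t + L)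
      (by linarith [hLL i]) (fun w _ => (hβ0 i w).le)
    linarith

theorem rhs_cont (hd : ∀ i, Continuous (d i)) (ha : ∀ i j, Continuous (a i j))
    (hβ : ∀ i, Continuous (β i)) (hc : ∀ i, Continuous (c i)) {y : ℝ → Fin m → ℝ} {t₀ : ℝ}
    (hr : ∀ i, 0 < r i)
    (hy : ∀ i, ContinuousOn (fun t => y t i) (Ici (t₀ - r i))) (i : Fin m) :
    ContinuousOn (fun t => rhs d a β c r i t y) (Ici t₀) := by
  have h1 : ∀ j, ContinuousOn (fun t => y t j) (Ici t₀) := fun j =>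
    (hy j).mono (Ici_subset_Ici.2 (by linarith [hr j]))
  have h2 : ContinuousOn (fun t => y (t - r i) i) (Ici t₀) :=
    (hy i).comp (by fun_prop) (fun t (ht : t₀ ≤ t) => by
      show t₀ - r i ≤ t - r i
      linarith)
  unfold rhs
  have hs : ContinuousOn (fun t => ∑ j, a i j t * y t j) (Ici t₀) :=
    continuousOn_finsetSum _ (fun j _ => ((ha i j).continuousOn).mul (h1 j))
  refine ContinuousOn.add (ContinuousOn.add ?_ hs) ?_
  · exact ((hd i).continuousOn.neg).mul (h1 i)
  · refine (((hβ i).continuousOn).mul h2).mul ?_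
    exact Real.continuous_exp.comp_continuousOn (((hc i).continuousOn.mul h2).neg)

theorem sol_deriv (hr : ∀ i, 0 < r i) (hN : NicholsonHyps m d a β c) {φ : XN m r}
    {y : ℝ → Fin m → ℝ} (hy : SolN d a β c r φ y) (i : Fin m) (t : ℝ) (ht : 0 < t) :
    HasDerivAt (fun u => y u i) (rhs d a β c r i t y) t := by
  have hcont := rhs_cont (fun i => (hN.1 i).1) (fun i j => (hN.2.1 i j).1) (fun i => (hN.2.2.1 i).1)
    (fun i => (hN.2.2.2.1 i).1) (t₀ := 0) hr (y := y) (by simpa using hy.1) i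
  have hint : ∀ u, 0 ≤ u → IntervalIntegrable (fun t => rhs d a β c r i t y) volume 0 u := fun u hu =>
    (hcont.mono (by rw [uIcc_of_le hu]; exact Icc_subset_Ici_self)).intervalIntegrable
  have heq : ∀ u, 0 ≤ u → y u i = y 0 i + ∫ w in (0:ℝ)..u, rhs d a β c r i w y := by
    intro u hu
    have := intervalIntegral.integral_eq_sub_of_hasDeriv_right (f := fun u => y u i)
      (f' := fun t => rhs d a β c r i t y) (a := 0) (b := u)
      ((hy.1 i).mono (by
        rw [uIcc_of_le hu]
        exact fun w hw => by
          show -(r i) ≤ w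
          linarith [hw.1, hr i]))
      (fun w hw => by
        rw [min_eq_left hu, max_eq_right hu] at hw
        exact (hy.2.2 i w hw.1.le).mono Ioi_subset_Ici_self) (hint u hu)
    rw [this]; ring
  have h1 : HasDerivAt (fun u => y 0 i + ∫ w in (0:ℝ)..u, rhs d a β c r i w y)
      (rhs d a β c r i t y) t := by
    apply HasDerivAt.const_add
    apply intervalIntegral.integral_hasDerivAt_right (hint t ht.le)
    · exact (hcont.mono Ioi_subset_Ici_self).stronglyMeasurableAtFilter isOpen_Ioi t ht
    · exact hcont.continuousAt (Ici_mem_nhds ht)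
  refine h1.congr_of_eventuallyEq ?_
  filter_upwards [Ioi_mem_nhds ht] with u hu
  exact heq u (le_of_lt hu)

/-- Scalar boundedness lemma. -/
theorem scalar_bdd {δ S S' : ℝ → ℝ} {C L κ t₂ : ℝ} (hδ : Continuous δ) (hδ0 : ∀ t, 0 ≤ δ t)
    (hC : 0 ≤ C) (hL : 0 < L) (hκ : 0 < κ) (hw : ∀ t, κ ≤ ∫ u in t..(t+L), δ u)
    (hS0 : ∀ t, t₂ ≤ t → 0 ≤ S t)
    (hS : ∀ t, t₂ ≤ t → HasDerivAt S (S' t) t) (hS' : ∀ t, t₂ ≤ t → S' t ≤ - δ t * S t + C) :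
    ∃ K, ∀ t, t₂ ≤ t → S t ≤ K := by
  have hint : ∀ p q, IntervalIntegrable δ volume p q := fun p q => hδ.intervalIntegrable p q
  have step : ∀ s t, t₂ ≤ s → s ≤ t → S t ≤ Real.exp (-(∫ u in s..t, δ u)) * S s + C * (t - s) := by
    intro s t hs hst
    have hd : ∀ u, s ≤ u → HasDerivAt (fun u => Real.exp ((∫ w in s..u, δ w) - ∫ w in s..t, δ w) * S u - C * u)
        (Real.exp ((∫ w in s..u, δ w) - ∫ w in s..t, δ w) * (δ u * S u + S' u) - C) u := fun u hu => by
      have h1 : HasDerivAt (fun u => (∫ w in s..u, δ w) - ∫ w in s..t, δ w) (δ u) u :=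
        (intervalIntegral.integral_hasDerivAt_right (hint _ _)
        (hδ.stronglyMeasurableAtFilter _ _) hδ.continuousAt).sub_const _
      refine ((h1.exp.mul (hS u (by linarith))).sub ((hasDerivAt_id u).const_mul C)).congr_deriv ?_
      ring
    have hanti : AntitoneOn (fun u => Real.exp ((∫ w in s..u, δ w) - ∫ w in s..t, δ w) * S u - C * u) (Icc s t) := by
      apply antitoneOn_of_deriv_nonpos (convex_Icc s t)
      · exact fun u hu => (hd u hu.1).continuousAt.continuousWithinAt
      · intro u hu
        rw [interior_Icc] at hu
        exact (hd u hu.1.le).differentiableAt.differentiableWithinAt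
      · intro u hu
        rw [interior_Icc] at hu
        rw [(hd u hu.1.le).deriv]
        have h1 := hS' u (by linarith [hu.1])
        have h2 : Real.exp ((∫ w in s..u, δ w) - ∫ w in s..t, δ w) ≤ 1 := by
          apply Real.exp_le_one_iff.2
          rw [← intervalIntegral.integral_add_adjacent_intervals (hint s u) (hint u t)]
          have := intervalIntegral.integral_nonneg (μ := volume) hu.2.le (fun w _ => hδ0 w)
          linarith
        have h3 := Real.exp_pos ((∫ w in s..u, δ w) - ∫ w in s..t, δ w)
        have h4 : Real.exp ((∫ w in s..u, δ w) - ∫ w in s..t, δ w) * (δ u * S u + S' u) ≤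
          Real.exp ((∫ w in s..u, δ w) - ∫ w in s..t, δ w) * C :=
          mul_le_mul_of_nonneg_left (by linarith) h3.le
        nlinarith
    have := hanti (left_mem_Icc.2 hst) (right_mem_Icc.2 hst) hst
    simp only [sub_self, Real.exp_zero, one_mul, intervalIntegral.integral_same, zero_sub] at this
    linarith
  set q := Real.exp (-κ) with hq
  have hq1 : q < 1 := by rw [hq]; exact Real.exp_lt_one_iff.2 (by linarith)
  set B1 := max (S t₂) (C * L / (1 - q)) with hB1
  have hB1' : C * L ≤ B1 * (1 - q) := by
    rw [← div_le_iff₀ (by linarith)]; exact le_max_right _ _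
  have hn : ∀ n : ℕ, S (t₂ + n * L) ≤ B1 := by
    intro n
    induction n with
    | zero => simp [hB1]
    | succ n ih =>
      have h0 : t₂ ≤ t₂ + n * L := by
        have : 0 ≤ (n:ℝ) * L := by positivity
        linarith
      have e := step (t₂ + n * L) (t₂ + n * L + L) h0 (by linarith)
      have h1 : Real.exp (-(∫ u in (t₂ + n * L)..(t₂ + n * L + L), δ u)) ≤ q := by
        apply Real.exp_le_exp.2; linarith [hw (t₂ + n * L)]
      have h2 := mul_le_mul h1 ih (hS0 _ h0) (Real.exp_pos _).le
      rw [show t₂ + ((n+1 : ℕ):ℝ) * L = t₂ + n * L + L by push_cast; ring]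
      rw [show t₂ + n * L + L - (t₂ + n * L) = L by ring] at e
      linarith
  refine ⟨B1 + C * L, fun t ht => ?_⟩
  have hx : 0 ≤ (t - t₂)/L := div_nonneg (by linarith) hL.le
  have f1 := Nat.floor_le hx
  have f2 := Nat.lt_floor_add_one ((t - t₂)/L)
  set n := ⌊(t - t₂)/L⌋₊
  rw [le_div_iff₀ hL] at f1
  rw [div_lt_iff₀ hL] at f2
  have h0 : t₂ ≤ t₂ + n * L := by
    have : 0 ≤ (n:ℝ) * L := by positivity
    linarith
  have e := step (t₂ + n * L) t h0 (by linarith)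
  have h1 : Real.exp (-(∫ u in (t₂ + n * L)..t, δ u)) ≤ 1 := by
    apply Real.exp_le_one_iff.2
    have := intervalIntegral.integral_nonneg (μ := volume) (a := t₂ + n * L) (b := t) (by linarith) (fun w _ => hδ0 w)
    linarith
  have h2 := mul_le_mul h1 (hn n) (hS0 _ h0) zero_le_one
  have h3 : C * (t - (t₂ + n * L)) ≤ C * L := mul_le_mul_of_nonneg_left (by linarith) hC
  linarith

end Nicholson

namespace Nicholson

variable {m : ℕ} {d : Fin m → ℝ → ℝ} {a : Fin m → Fin m → ℝ → ℝ} {β c : Fin m → ℝ → ℝ}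
  {r μ : Fin m → ℝ} {η₀ L κ B R c₀ : ℝ}

theorem exists_delta (hm : 1 ≤ m) (hN : NicholsonHyps m d a β c) :
    ∃ δ : ℝ → ℝ, AlmostPeriodic δ ∧ (∀ t, 0 < δ t) ∧ ∀ i t, δ t ≤ d i t - ∑ j, a j i t := by
  have hne : (Finset.univ : Finset (Fin m)).Nonempty := ⟨⟨0, hm⟩, Finset.mem_univ _⟩
  refine ⟨fun t => Finset.univ.inf' hne (fun i => d i t - ∑ j, a j i t), ⟨?_, ?_⟩, ?_, ?_⟩
  · apply Continuous.finset_inf'_apply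
    intro i _
    exact (hN.1 i).1.sub (continuous_finsetSum _ (fun j _ => (hN.2.1 j i).1))
  · intro ε hε
    obtain ⟨L, hL, h⟩ := coefs_common hN (ε := ε / (m + 2)) (by positivity)
    refine ⟨L, hL, fun p => ?_⟩
    obtain ⟨s, hs, h⟩ := h p
    refine ⟨s, hs, fun t => ?_⟩
    have key : ∀ i, |(d i (t+s) - ∑ j, a j i (t+s)) - (d i t - ∑ j, a j i t)| ≤ ε / (m+2) * (m+1) := by
      intro i
      have e : (d i (t+s) - ∑ j, a j i (t+s)) - (d i t - ∑ j, a j i t) =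
        (d i (t+s) - d i t) - ∑ j, (a j i (t+s) - a j i t) := by
        rw [Finset.sum_sub_distrib]; ring
      rw [e]
      have e1 : |∑ j, (a j i (t+s) - a j i t)| ≤ m * (ε/(m+2)) := by
        refine (Finset.abs_sum_le_sum_abs _ _).trans ?_
        refine (Finset.sum_le_sum (fun j _ => ((h t).2.1 j i).le)).trans ?_
        simp
      have e2 := (h t).1 i
      refine (abs_sub _ _).trans ?_
      linarith
    have hlt : ε / (m+2) * (m+1) < ε := by
      rw [div_mul_eq_mul_div, div_lt_iff₀ (by positivity)]
      nlinarith
    refine lt_of_le_of_lt ?_ hlt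
    rw [abs_le]
    constructor
    · rw [neg_le_sub_iff_le_add]
      have : Finset.univ.inf' hne (fun i => d i t - ∑ j, a j i t) - ε / (m+2) * (m+1) ≤
        Finset.univ.inf' hne (fun i => d i (t+s) - ∑ j, a j i (t+s)) := by
        apply Finset.le_inf'
        intro i hi
        have h1 := Finset.inf'_le (fun i => d i t - ∑ j, a j i t) hi
        have := (abs_le.1 (key i)).1
        linarith
      linarith
    · rw [sub_le_iff_le_add']
      have : Finset.univ.inf' hne (fun i => d i (t+s) - ∑ j, a j i (t+s)) - ε / (m+2) * (m+1) ≤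
        Finset.univ.inf' hne (fun i => d i t - ∑ j, a j i t) := by
        apply Finset.le_inf'
        intro i hi
        have h1 := Finset.inf'_le (fun i => d i (t+s) - ∑ j, a j i (t+s)) hi
        have := (abs_le.1 (key i)).2
        linarith
      linarith
  · intro t
    rw [Finset.lt_inf'_iff]
    exact fun i _ => hN.2.2.2.2.2.2.2.2.2 i t
  · intro i t
    exact Finset.inf'_le (fun i => d i t - ∑ j, a j i t) (Finset.mem_univ i)

theorem sol_bdd (hm : 1 ≤ m) (H : Core d a β c r μ η₀ L κ B R c₀) (hN : NicholsonHyps m d a β c)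
    {y : ℝ → Fin m → ℝ} {t₂ : ℝ}
    (hder : ∀ i t, t₂ ≤ t → HasDerivAt (fun u => y u i) (rhs d a β c r i t y) t)
    (hpos : ∀ i t, t₂ - R ≤ t → 0 ≤ y t i) : ∃ K, ∀ i t, t₂ ≤ t → y t i ≤ K := by
  obtain ⟨δ, hδ, hδ0, hδ1⟩ := exists_delta hm hN
  obtain ⟨L', hL', κ', hκ', hw⟩ := AP_window hδ (fun t => (hδ0 t).le) (hδ0 0)
  have hR := H.Rpos
  have hc₀ := H.c₀pos
  have hB := H.Bpos
  obtain ⟨K, hK⟩ := scalar_bdd (S := fun t => ∑ i, y t i) (S' := fun t => ∑ i, rhs d a β c r i t y)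
    (C := m * (B * (1/c₀))) (t₂ := t₂)
    hδ.1 (fun t => (hδ0 t).le) (by positivity) hL' hκ' hw
    (fun t ht => Finset.sum_nonneg (fun i _ => hpos i t (by linarith)))
    (fun t ht => HasDerivAt.fun_sum (fun i _ => hder i t ht))
    (fun t ht => by
      have e1 : ∀ i, β i t * y (t - r i) i * Real.exp (-(c i t * y (t - r i) i)) ≤ B * (1/c₀) := by
        intro i
        have z := hpos i (t - r i) (by linarith [H.rle i])
        have hc := H.cc i t
        have hcp : 0 < c i t := by linarith
        rw [mul_assoc]
        apply mul_le_mul (H.bB i t) _ (by positivity) hB.le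
        rw [Real.exp_neg, ← div_eq_mul_inv, div_le_div_iff₀ (Real.exp_pos _) hc₀]
        have := Real.add_one_le_exp (c i t * y (t - r i) i)
        nlinarith
      have e2 : ∑ i, β i t * y (t - r i) i * Real.exp (-(c i t * y (t - r i) i)) ≤ m * (B * (1/c₀)) := by
        refine (Finset.sum_le_sum (fun i _ => e1 i)).trans ?_
        simp
      have e3 : ∑ i, rhs d a β c r i t y = - ∑ i, (d i t - ∑ j, a j i t) * y t i +
          ∑ i, β i t * y (t - r i) i * Real.exp (-(c i t * y (t - r i) i)) := by
        unfold rhs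
        rw [Finset.sum_add_distrib, Finset.sum_add_distrib, Finset.sum_comm]
        simp only [sub_mul, Finset.sum_sub_distrib, Finset.sum_mul, neg_mul, Finset.sum_neg_distrib]
        ring
      have e4 : δ t * ∑ i, y t i ≤ ∑ i, (d i t - ∑ j, a j i t) * y t i := by
        rw [Finset.mul_sum]
        exact Finset.sum_le_sum (fun i _ => mul_le_mul_of_nonneg_right (hδ1 i t) (hpos i t (by linarith)))
      rw [e3]
      linarith)
  refine ⟨K, fun i t ht => le_trans ?_ (hK t ht)⟩
  exact Finset.single_le_sum (f := fun i => y t i) (fun i _ => hpos i t (by linarith)) (Finset.mem_univ i)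

theorem Apx.weaken {ε ε' M M' K K' t₀ : ℝ} {x x' : ℝ → Fin m → ℝ}
    (h : Apx d a β c r R ε M K t₀ x x') (h1 : ε ≤ ε') (h2 : M' ≤ M) (h3 : K ≤ K') :
    Apx d a β c r R ε' M' K' t₀ x x' where
  der := h.der
  cont := h.cont
  err i t ht := (h.err i t ht).trans h1
  lb i t ht := h2.trans (h.lb i t ht)
  ub i t ht := (h.ub i t ht).trans h3

theorem sol_apx (hm : 1 ≤ m) (H : Core d a β c r μ η₀ L κ B R c₀) (hN : NicholsonHyps m d a β c)
    {φ : XN m r} {y : ℝ → Fin m → ℝ} (hy : SolN d a β c r φ y) {M : ℝ} (hM : 0 < M)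
    {s₀ : ℝ} (hlb : ∀ t, s₀ ≤ t → ∀ i, M ≤ y t i) :
    ∃ t₁ K, M ≤ K ∧ 0 < t₁ ∧ Apx d a β c r R 0 M K t₁ y (fun t i => rhs d a β c r i t y) := by
  have hR := H.Rpos
  set t₂ := max s₀ 0 + R + 1 with ht₂
  have g1 := le_max_left s₀ 0
  have g2 := le_max_right s₀ 0
  have hder : ∀ i t, t₂ - R ≤ t → HasDerivAt (fun u => y u i) (rhs d a β c r i t y) t := fun i t ht =>
    sol_deriv H.rpos hN hy i t (by linarith)
  obtain ⟨K, hK⟩ := sol_bdd hm H hN (t₂ := t₂) (fun i t ht => hder i t (by linarith))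
    (fun i t ht => hM.le.trans (hlb t (by linarith) i))
  refine ⟨t₂ + R, K, (hlb t₂ (by linarith) ⟨0, hm⟩).trans (hK ⟨0, hm⟩ t₂ le_rfl), by linarith,
    fun i t ht => hder i t (by linarith), fun i => ?_, fun i t ht => by simp,
    fun i t ht => hlb t (by linarith) i, fun i t ht => hK i t (by linarith)⟩
  exact rhs_cont (fun i => (hN.1 i).1) (fun i j => (hN.2.1 i j).1) (fun i => (hN.2.2.1 i).1)
    (fun i => (hN.2.2.2.1 i).1) H.rpos (fun j u hu => by
      have hu : t₂ + R - r j ≤ u := hu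
      exact (hder j u (by linarith [H.rle j])).continuousAt.continuousWithinAt) i

end Nicholson

namespace Nicholson

variable {m : ℕ} {d : Fin m → ℝ → ℝ} {a : Fin m → Fin m → ℝ → ℝ} {β c : Fin m → ℝ → ℝ}
  {r μ : Fin m → ℝ} {η₀ L κ B R c₀ : ℝ}

theorem hbar_lip {c p q : ℝ} (hc : 0 < c) :
    |(|p| * Real.exp (-(c*|p|)) - |q| * Real.exp (-(c*|q|)))| ≤ |p - q| := by
  have main : ∀ p q : ℝ, 0 ≤ q → q ≤ p →
      |p * Real.exp (-(c*p)) - q * Real.exp (-(c*q))| ≤ p - q := by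
    intro p q hq hpq
    have h1 := h_lip hc hpq
    have h2 : Real.exp (-2) ≤ 1 := Real.exp_le_one_iff.2 (by norm_num)
    have h3 : Real.exp (-(c*p)) ≤ Real.exp (-(c*q)) := by
      apply Real.exp_le_exp.2; nlinarith
    have h4 : Real.exp (-(c*p)) ≤ 1 := by
      apply Real.exp_le_one_iff.2
      have : 0 ≤ c * p := mul_nonneg hc.le (by linarith)
      linarith
    rw [abs_le]
    constructor
    · nlinarith
    · nlinarith
  refine le_trans ?_ (abs_abs_sub_abs_le_abs_sub p q)
  rcases le_total |q| |p| with h | h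
  · rw [abs_of_nonneg (sub_nonneg.2 h)]
    exact main _ _ (abs_nonneg _) h
  · rw [abs_sub_comm, abs_sub_comm |p|, abs_of_nonneg (sub_nonneg.2 h)]
    exact main _ _ (abs_nonneg _) h

/-- scaled forcing term -/
def gF (d : Fin m → ℝ → ℝ) (a : Fin m → Fin m → ℝ → ℝ) (β c : Fin m → ℝ → ℝ)
    (r : Fin m → ℝ) (B k : ℝ) (z : ℝ → Fin m → ℝ) (i : Fin m) (s : ℝ) : ℝ :=
  (B - d i s) * |z s i| + ∑ j, a i j s * |z s j| +
    β i s * (Real.exp (-(k * s)) * (|Real.exp (k * max (s - r i) 0) * z (s - r i) i| *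
      Real.exp (-(c i s * |Real.exp (k * max (s - r i) 0) * z (s - r i) i|))))

theorem gF_cont (hd : ∀ i, Continuous (d i)) (ha : ∀ i j, Continuous (a i j))
    (hβ : ∀ i, Continuous (β i)) (hc : ∀ i, Continuous (c i)) (k : ℝ) {z : ℝ → Fin m → ℝ}
    (hz : Continuous z) (i : Fin m) : Continuous (gF d a β c r B k z i) := by
  have h1 : ∀ j, Continuous (fun s => z s j) := fun j => (continuous_apply j).comp hz
  have h2 : Continuous (fun s => z (s - r i) i) := (h1 i).comp (by fun_prop)
  have h3 := hd i
  have h4 := hβ i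
  have h5 := hc i
  have hs : Continuous (fun s => ∑ j, a i j s * |z s j|) :=
    continuous_finsetSum _ (fun j _ => (ha i j).mul (h1 j).abs)
  have h6 := h1 i
  unfold gF
  fun_prop

theorem gF_nonneg (H : Core d a β c r μ η₀ L κ B R c₀) (k : ℝ) (z : ℝ → Fin m → ℝ) (i : Fin m) (s : ℝ) :
    0 ≤ gF d a β c r B k z i s := by
  unfold gF
  have h1 := H.dB i s
  have h2 := H.b0 i s
  have h3 : 0 ≤ ∑ j, a i j s * |z s j| :=
    Finset.sum_nonneg (fun j _ => mul_nonneg (H.a0 i j s) (abs_nonneg _))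
  have h4 : 0 ≤ (B - d i s) * |z s i| := mul_nonneg (by linarith) (abs_nonneg _)
  positivity

theorem gF_lip (H : Core d a β c r μ η₀ L κ B R c₀) {k D : ℝ} (hk : 0 ≤ k) {z z' : ℝ → Fin m → ℝ}
    (hD : ∀ i t, |z t i - z' t i| ≤ D) (i : Fin m) {s : ℝ} (hs : 0 ≤ s) :
    |gF d a β c r B k z i s - gF d a β c r B k z' i s| ≤ (m + 2) * B * D := by
  have hB := H.Bpos
  have hD0 : 0 ≤ D := (abs_nonneg _).trans (hD i 0)
  have habs : ∀ j t, |(|z t j| - |z' t j|)| ≤ D := fun j t => (abs_abs_sub_abs_le_abs_sub _ _).trans (hD j t)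
  have e1 : |((B - d i s) * |z s i| - (B - d i s) * |z' s i|)| ≤ B * D := by
    rw [← mul_sub, abs_mul]
    apply mul_le_mul _ (habs i s) (abs_nonneg _) hB.le
    rw [abs_of_nonneg (by linarith [H.dB i s])]
    linarith [H.d0 i s]
  have e2 : |(∑ j, a i j s * |z s j| - ∑ j, a i j s * |z' s j|)| ≤ m * (B * D) := by
    rw [← Finset.sum_sub_distrib]
    refine (Finset.abs_sum_le_sum_abs _ _).trans ?_
    have : ∀ j ∈ Finset.univ, |(a i j s * |z s j| - a i j s * |z' s j|)| ≤ B * D := fun j _ => by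
      rw [← mul_sub, abs_mul]
      apply mul_le_mul _ (habs j s) (abs_nonneg _) hB.le
      rw [abs_of_nonneg (H.a0 i j s)]
      exact H.aB i j s
    refine (Finset.sum_le_sum this).trans ?_
    simp
  set p := Real.exp (k * max (s - r i) 0) * z (s - r i) i with hp
  set q := Real.exp (k * max (s - r i) 0) * z' (s - r i) i with hq
  have e3 : |β i s * (Real.exp (-(k * s)) * (|p| * Real.exp (-(c i s * |p|)))) -
     β i s * (Real.exp (-(k * s)) * (|q| * Real.exp (-(c i s * |q|))))| ≤ B * D := by
    rw [← mul_sub, abs_mul, ← mul_sub, abs_mul, abs_of_nonneg (H.b0 i s), abs_of_pos (Real.exp_pos _)]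
    apply mul_le_mul (H.bB i s) _ (by positivity) hB.le
    have h1 := hbar_lip (p := p) (q := q) (lt_of_lt_of_le H.c₀pos (H.cc i s))
    have h2 : |p - q| ≤ Real.exp (k * s) * D := by
      rw [hp, hq, ← mul_sub, abs_mul, abs_of_pos (Real.exp_pos _)]
      apply mul_le_mul _ (hD _ _) (abs_nonneg _) (Real.exp_pos _).le
      apply Real.exp_le_exp.2
      apply mul_le_mul_of_nonneg_left _ hk
      exact max_le (by linarith [H.rpos i]) hs
    rw [Real.exp_neg, inv_mul_le_iff₀ (Real.exp_pos _)]
    exact h1.trans h2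
  have e4 : gF d a β c r B k z i s - gF d a β c r B k z' i s =
    ((B - d i s) * |z s i| - (B - d i s) * |z' s i|) +
    (∑ j, a i j s * |z s j| - ∑ j, a i j s * |z' s j|) +
    (β i s * (Real.exp (-(k * s)) * (|p| * Real.exp (-(c i s * |p|)))) -
     β i s * (Real.exp (-(k * s)) * (|q| * Real.exp (-(c i s * |q|))))) := by
    unfold gF
    rw [← hp, ← hq]
    ring
  rw [e4]
  refine (abs_add_le _ _).trans ?_
  have := abs_add_le ((B - d i s) * |z s i| - (B - d i s) * |z' s i|)
    (∑ j, a i j s * |z s j| - ∑ j, a i j s * |z' s j|)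
  linarith

theorem int_bound {g : ℝ → ℝ} {Λ A T : ℝ} (hΛ : 0 < Λ) (hT : 0 ≤ T) (hA : 0 ≤ A)
    (hg : ∀ s ∈ Icc 0 T, |g s| ≤ A) :
    |Real.exp (-(Λ * T)) * ∫ s in (0:ℝ)..T, Real.exp (Λ * s) * g s| ≤ A / Λ := by
  have hd : ∀ u, HasDerivAt (fun u => A * Real.exp (Λ * u) / Λ) (Real.exp (Λ * u) * A) u := fun u => by
    have h1 : HasDerivAt (fun u => Λ * u) Λ u := by
      simpa using (hasDerivAt_id u).const_mul Λ
    refine ((h1.exp.const_mul A).div_const Λ).congr_deriv ?_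
    field_simp
  have e1 : ∫ s in (0:ℝ)..T, Real.exp (Λ * s) * A = A * Real.exp (Λ * T) / Λ - A * Real.exp (Λ * 0) / Λ :=
    intervalIntegral.integral_eq_sub_of_hasDerivAt (fun u _ => hd u)
      (Continuous.intervalIntegrable (by fun_prop) _ _)
  have e2 : ‖∫ s in (0:ℝ)..T, Real.exp (Λ * s) * g s‖ ≤ ∫ s in (0:ℝ)..T, Real.exp (Λ * s) * A := by
    apply intervalIntegral.norm_integral_le_of_norm_le hT
    · refine Filter.Eventually.of_forall (fun s hs => ?_)
      rw [Real.norm_eq_abs, abs_mul, abs_of_pos (Real.exp_pos _)]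
      exact mul_le_mul_of_nonneg_left (hg s ⟨hs.1.le, hs.2⟩) (Real.exp_pos _).le
    · exact Continuous.intervalIntegrable (by fun_prop) _ _
  rw [Real.norm_eq_abs] at e2
  rw [abs_mul, abs_of_pos (Real.exp_pos _), Real.exp_neg, inv_mul_le_iff₀ (Real.exp_pos _)]
  have : 0 ≤ A * Real.exp (Λ * 0) / Λ := by positivity
  calc _ ≤ _ := e2
    _ ≤ A * Real.exp (Λ * T) / Λ := by rw [e1]; linarith
    _ = _ := by ring

/-- the integral operator, componentwise -/
def PhiF (d : Fin m → ℝ → ℝ) (a : Fin m → Fin m → ℝ → ℝ) (β c : Fin m → ℝ → ℝ)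
    (r : Fin m → ℝ) (B k Λ : ℝ) (z : ℝ → Fin m → ℝ) (t : ℝ) (i : Fin m) : ℝ :=
  Real.exp (-(Λ * max t 0)) * (1 + ∫ s in (0:ℝ)..(max t 0), Real.exp (Λ * s) * gF d a β c r B k z i s)

theorem exists_fix (H : Core d a β c r μ η₀ L κ B R c₀) (hN : NicholsonHyps m d a β c)
    {k Λ : ℝ} (hk : 0 ≤ k) (hΛ : Λ = 2 * ((m + 2) * B)) :
    ∃ z : ℝ → Fin m → ℝ, Continuous z ∧ ∀ t i, z t i = PhiF d a β c r B k Λ z t i := by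
  have hB := H.Bpos
  have hΛ0 : 0 < Λ := by rw [hΛ]; positivity
  have gc : ∀ (z : ℝ → Fin m → ℝ), Continuous z → ∀ i, Continuous (gF d a β c r B k z i) := fun z hz i =>
    gF_cont (fun i => (hN.1 i).1) (fun i j => (hN.2.1 i j).1) (fun i => (hN.2.2.1 i).1)
    (fun i => (hN.2.2.2.1 i).1) k hz i
  have hcont : ∀ z : ℝ → Fin m → ℝ, Continuous z → Continuous (PhiF d a β c r B k Λ z) := by
    intro z hz
    apply continuous_pi
    intro i
    unfold PhiF
    have h1 : Continuous (fun T => ∫ s in (0:ℝ)..T, Real.exp (Λ * s) * gF d a β c r B k z i s) := by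
      apply intervalIntegral.continuous_primitive
      intro p q
      have := gc z hz i
      exact Continuous.intervalIntegrable (by fun_prop) _ _
    have h2 : Continuous (fun t : ℝ => ∫ s in (0:ℝ)..(max t 0), Real.exp (Λ * s) * gF d a β c r B k z i s) :=
      h1.comp (by fun_prop)
    fun_prop
  have hlip : ∀ (z z' : ℝ → Fin m → ℝ), Continuous z → Continuous z' → ∀ D, (∀ i t, |z t i - z' t i| ≤ D) →
      ∀ t i, |PhiF d a β c r B k Λ z t i - PhiF d a β c r B k Λ z' t i| ≤ D / 2 := by
    intro z z' hz hz' D hD t i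
    have hD0 : 0 ≤ D := (abs_nonneg _).trans (hD i 0)
    have c1 := gc z hz i
    have c2 := gc z' hz' i
    have e : PhiF d a β c r B k Λ z t i - PhiF d a β c r B k Λ z' t i =
      Real.exp (-(Λ * max t 0)) * ∫ s in (0:ℝ)..(max t 0), Real.exp (Λ * s) *
        (gF d a β c r B k z i s - gF d a β c r B k z' i s) := by
      unfold PhiF
      simp only [mul_sub]
      rw [intervalIntegral.integral_sub]
      · ring
      · exact Continuous.intervalIntegrable (by fun_prop) _ _
      · exact Continuous.intervalIntegrable (by fun_prop) _ _
    rw [e]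
    refine (int_bound (A := (m + 2) * B * D) hΛ0 (le_max_right _ _) (by positivity)
      (fun s hs => gF_lip H hk hD i hs.1)).trans (le_of_eq ?_)
    rw [hΛ]; field_simp
  have hzero : ∀ t i, |PhiF d a β c r B k Λ (fun _ _ => 0) t i| ≤ 1 := by
    intro t i
    have : PhiF d a β c r B k Λ (fun _ _ => 0) t i = Real.exp (-(Λ * max t 0)) := by
      simp [PhiF, gF]
    rw [this, abs_of_pos (Real.exp_pos _)]
    apply Real.exp_le_one_iff.2
    have : 0 ≤ Λ * max t 0 := mul_nonneg hΛ0.le (le_max_right _ _)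
    linarith
  have hcomp : ∀ (z z' : BoundedContinuousFunction ℝ (Fin m → ℝ)) i t, |z t i - z' t i| ≤ dist z z' := by
    intro z z' i t
    rw [← Real.dist_eq]
    exact (dist_le_pi_dist (z t) (z' t) i).trans (BoundedContinuousFunction.dist_coe_le_dist t)
  have hbd : ∀ (z : BoundedContinuousFunction ℝ (Fin m → ℝ)) t,
      ‖PhiF d a β c r B k Λ z t‖ ≤ 1 + dist z 0 := by
    intro z t
    have h0 : 0 ≤ dist z 0 := dist_nonneg
    rw [pi_norm_le_iff_of_nonneg (by linarith)]
    intro i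
    have h1 := hlip z (fun _ _ => 0) z.continuous continuous_const (dist z 0)
      (fun i t => hcomp z 0 i t) t i
    have h2 := hzero t i
    rw [Real.norm_eq_abs]
    rw [abs_le] at *
    constructor <;> linarith [h1.1, h1.2, h2.1, h2.2]
  let Φ : BoundedContinuousFunction ℝ (Fin m → ℝ) → BoundedContinuousFunction ℝ (Fin m → ℝ) := fun z =>
    BoundedContinuousFunction.ofNormedAddCommGroup (PhiF d a β c r B k Λ z) (hcont z z.continuous)
      (1 + dist z 0) (hbd z)
  have hΦ : ContractingWith (1/2) Φ := by
    refine ⟨by rw [← NNReal.coe_lt_coe]; norm_num, LipschitzWith.of_dist_le_mul (fun z z' => ?_)⟩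
    rw [BoundedContinuousFunction.dist_le (by positivity)]
    intro t
    rw [dist_pi_le_iff (by positivity)]
    intro i
    rw [Real.dist_eq]
    refine (hlip z z' z.continuous z'.continuous (dist z z') (fun i t => hcomp z z' i t) t i).trans (le_of_eq ?_)
    simp; ring
  refine ⟨hΦ.fixedPoint, (hΦ.fixedPoint).continuous, fun t i => ?_⟩
  have := hΦ.fixedPoint_isFixedPt
  conv_lhs => rw [← this]
  rfl

theorem exists_sol (H : Core d a β c r μ η₀ L κ B R c₀) (hN : NicholsonHyps m d a β c) :
    ∃ y : ℝ → Fin m → ℝ, SolN d a β c r (fun _ _ => 1) y := by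
  have hB := H.Bpos
  set Λ := 2 * ((m + 2) * B) with hΛ
  set k := Λ - B with hk
  have hk0 : 0 ≤ k := by
    rw [hk, hΛ]
    have : 0 ≤ (m:ℝ) * B := by positivity
    nlinarith
  obtain ⟨z, hz, hfix⟩ := exists_fix H hN hk0 hΛ
  have gc : ∀ i, Continuous (gF d a β c r B k z i) := fun i =>
    gF_cont (fun i => (hN.1 i).1) (fun i j => (hN.2.1 i j).1) (fun i => (hN.2.2.1 i).1)
    (fun i => (hN.2.2.2.1 i).1) k hz i
  have hz0 : ∀ t i, 0 ≤ z t i := fun t i => by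
    rw [hfix]
    unfold PhiF
    apply mul_nonneg (Real.exp_pos _).le
    have := intervalIntegral.integral_nonneg (μ := volume) (f := fun s => Real.exp (Λ * s) * gF d a β c r B k z i s)
      (le_max_right t 0) (fun s _ => mul_nonneg (Real.exp_pos _).le (gF_nonneg H k z i s))
    linarith
  set y : ℝ → Fin m → ℝ := fun t i => Real.exp (k * max t 0) * z t i with hy
  have hyc : ∀ i, Continuous (fun t => y t i) := fun i => by
    have : Continuous (fun t => z t i) := (continuous_apply i).comp hz
    simp only [hy]
    fun_prop
  have hy0 : ∀ t i, 0 ≤ y t i := fun t i => mul_nonneg (Real.exp_pos _).le (hz0 t i)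
  refine ⟨y, fun i => (hyc i).continuousOn, fun i s => ?_, fun i t ht => ?_⟩
  · have : max (s:ℝ) 0 = 0 := max_eq_right s.2.2
    simp only [hy]
    rw [hfix]
    simp [PhiF, this]
  · have hyU : ∀ u, 0 ≤ u → y u i = Real.exp (-(B * u)) *
        (1 + ∫ s in (0:ℝ)..u, Real.exp (Λ * s) * gF d a β c r B k z i s) := by
      intro u hu
      simp only [hy]
      rw [hfix]
      unfold PhiF
      rw [max_eq_left hu, ← mul_assoc, ← Real.exp_add]
      congr 2
      rw [hk]; ring
    have hc1 : Continuous (fun s => Real.exp (Λ * s) * gF d a β c r B k z i s) := by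
      have := gc i
      fun_prop
    have hU : HasDerivAt (fun u => Real.exp (-(B * u)) *
        (1 + ∫ s in (0:ℝ)..u, Real.exp (Λ * s) * gF d a β c r B k z i s))
        (rhs d a β c r i t y) t := by
      have h1 : HasDerivAt (fun u => -(B * u)) (-B) t :=
        (((hasDerivAt_id t).const_mul B).neg).congr_deriv (by simp)
      have h2 : HasDerivAt (fun u => ∫ s in (0:ℝ)..u, Real.exp (Λ * s) * gF d a β c r B k z i s)
          (Real.exp (Λ * t) * gF d a β c r B k z i t) t :=
        intervalIntegral.integral_hasDerivAt_right (hc1.intervalIntegrable _ _)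
          (hc1.stronglyMeasurableAtFilter _ _) hc1.continuousAt
      refine (h1.exp.mul (h2.const_add 1)).congr_deriv ?_
      have e1 : Real.exp (-(B * t)) * (Real.exp (Λ * t) * gF d a β c r B k z i t) =
          (B - d i t) * y t i + ∑ j, a i j t * y t j +
          β i t * y (t - r i) i * Real.exp (-(c i t * y (t - r i) i)) := by
        rw [← mul_assoc, ← Real.exp_add, show -(B*t) + Λ * t = k * t by rw [hk]; ring]
        unfold gF
        have f1 : ∀ j, Real.exp (k * t) * |z t j| = y t j := fun j => by
          simp only [hy]
          rw [abs_of_nonneg (hz0 t j), max_eq_left ht]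
        have f2 : Real.exp (k * max (t - r i) 0) * z (t - r i) i = y (t - r i) i := rfl
        rw [f2, abs_of_nonneg (hy0 _ _), mul_add, mul_add, Finset.mul_sum]
        have f3 : ∀ j, Real.exp (k*t) * (a i j t * |z t j|) = a i j t * y t j := fun j => by
          rw [← f1]; ring
        have f4 : Real.exp (k*t) * ((B - d i t) * |z t i|) = (B - d i t) * y t i := by
          rw [← f1]; ring
        have f5 : Real.exp (k*t) * Real.exp (-(k*t)) = 1 := by
          rw [← Real.exp_add]; simp
        simp only [f3, f4]
        linear_combination (β i t * y (t - r i) i * Real.exp (-(c i t * y (t - r i) i))) * f5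
      have e2 := hyU t ht
      unfold rhs
      linear_combination e1 + B * e2
    refine hU.hasDerivWithinAt.congr (fun u hu => hyU u (ht.trans hu)) (hyU t ht)

end Nicholson

namespace Nicholson

variable {m : ℕ} {d : Fin m → ℝ → ℝ} {a : Fin m → Fin m → ℝ → ℝ} {β c : Fin m → ℝ → ℝ}
  {r μ : Fin m → ℝ} {η₀ L κ B R c₀ : ℝ}

theorem rhs_lip (H : Core d a β c r μ η₀ L κ B R c₀) {x y : ℝ → Fin m → ℝ} {t D : ℝ} (i : Fin m)
    (hx : 0 ≤ x (t - r i) i) (hy : 0 ≤ y (t - r i) i) (hD : ∀ j, |x t j - y t j| ≤ D)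
    (hD' : |x (t - r i) i - y (t - r i) i| ≤ D) :
    |rhs d a β c r i t x - rhs d a β c r i t y| ≤ (m + 2) * B * D := by
  have hB := H.Bpos
  have e1 : |d i t * (x t i - y t i)| ≤ B * D := by
    rw [abs_mul]
    apply mul_le_mul _ (hD i) (abs_nonneg _) hB.le
    rw [abs_of_nonneg (H.d0 i t)]
    exact H.dB i t
  have e2 : |∑ j, a i j t * (x t j - y t j)| ≤ m * (B * D) := by
    refine (Finset.abs_sum_le_sum_abs _ _).trans ?_
    have : ∀ j ∈ Finset.univ, |a i j t * (x t j - y t j)| ≤ B * D := fun j _ => by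
      rw [abs_mul]
      apply mul_le_mul _ (hD j) (abs_nonneg _) hB.le
      rw [abs_of_nonneg (H.a0 i j t)]
      exact H.aB i j t
    refine (Finset.sum_le_sum this).trans ?_
    simp
  have e3 : |β i t * (x (t - r i) i * Real.exp (-(c i t * x (t - r i) i)) -
      y (t - r i) i * Real.exp (-(c i t * y (t - r i) i)))| ≤ B * D := by
    rw [abs_mul, abs_of_nonneg (H.b0 i t)]
    apply mul_le_mul (H.bB i t) _ (abs_nonneg _) hB.le
    have h1 := hbar_lip (p := x (t - r i) i) (q := y (t - r i) i) (lt_of_lt_of_le H.c₀pos (H.cc i t))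
    rw [abs_of_nonneg hx, abs_of_nonneg hy] at h1
    exact h1.trans hD'
  have e4 : rhs d a β c r i t x - rhs d a β c r i t y = -(d i t * (x t i - y t i)) +
      ∑ j, a i j t * (x t j - y t j) + β i t * (x (t - r i) i * Real.exp (-(c i t * x (t - r i) i)) -
      y (t - r i) i * Real.exp (-(c i t * y (t - r i) i))) := by
    unfold rhs
    simp only [mul_sub, Finset.sum_sub_distrib]
    ring
  rw [e4]
  rw [abs_le] at *
  constructor <;> linarith [e1.1, e1.2, e2.1, e2.2, e3.1, e3.2]

/-- `s` is a common `ε`-period of the coefficients -/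
def Per (d : Fin m → ℝ → ℝ) (a : Fin m → Fin m → ℝ → ℝ) (β c : Fin m → ℝ → ℝ) (ε s : ℝ) : Prop :=
  ∀ t, (∀ i, |d i (t+s) - d i t| < ε) ∧
      (∀ i j, |a i j (t+s) - a i j t| < ε) ∧ (∀ i, |β i (t+s) - β i t| < ε) ∧
      (∀ i, |c i (t+s) - c i t| < ε)

theorem exp_neg_lip {u v : ℝ} (hu : 0 ≤ u) (hv : 0 ≤ v) :
    |Real.exp (-u) - Real.exp (-v)| ≤ |u - v| := by
  have main : ∀ u v : ℝ, 0 ≤ u → u ≤ v → |Real.exp (-u) - Real.exp (-v)| ≤ v - u := by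
    intro u v hu huv
    have h1 : Real.exp (-v) ≤ Real.exp (-u) := Real.exp_le_exp.2 (by linarith)
    rw [abs_of_nonneg (by linarith)]
    have h2 : Real.exp (-v) = Real.exp (-u) * Real.exp (u - v) := by rw [← Real.exp_add]; ring_nf
    have h3 := Real.add_one_le_exp (u - v)
    have h4 : Real.exp (-u) ≤ 1 := Real.exp_le_one_iff.2 (by linarith)
    have h5 := Real.exp_pos (-u)
    rw [h2]
    nlinarith
  rcases le_total u v with h | h
  · rw [abs_sub_comm u v, abs_of_nonneg (sub_nonneg.2 h)]
    exact main u v hu h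
  · rw [abs_sub_comm, abs_of_nonneg (sub_nonneg.2 h)]
    exact main v u hv h

theorem rhs_shift (H : Core d a β c r μ η₀ L κ B R c₀) {y : ℝ → Fin m → ℝ} {t s ε K : ℝ} (i : Fin m)
    (hp : Per d a β c ε s) (hK : ∀ j, 0 ≤ y (t + s) j ∧ y (t + s) j ≤ K)
    (hK' : 0 ≤ y (t + s - r i) i ∧ y (t + s - r i) i ≤ K) :
    |rhs d a β c r i (t + s) y - rhs d a β c r i t (fun u => y (u + s))| ≤
      ε * (K + m * K + K + B * K * K) := by
  have hB := H.Bpos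
  obtain ⟨p1, p2, p3, p4⟩ := hp t
  have hK0 : 0 ≤ K := hK'.1.trans hK'.2
  have hε : 0 ≤ ε := (abs_nonneg _).trans (p1 i).le
  set w := y (t + s - r i) i with hw
  have e1 : |(d i (t+s) - d i t) * y (t+s) i| ≤ ε * K := by
    rw [abs_mul]
    apply mul_le_mul (p1 i).le _ (abs_nonneg _) hε
    rw [abs_of_nonneg (hK i).1]; exact (hK i).2
  have e2 : |∑ j, (a i j (t+s) - a i j t) * y (t+s) j| ≤ m * (ε * K) := by
    refine (Finset.abs_sum_le_sum_abs _ _).trans ?_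
    have : ∀ j ∈ Finset.univ, |(a i j (t+s) - a i j t) * y (t+s) j| ≤ ε * K := fun j _ => by
      rw [abs_mul]
      apply mul_le_mul (p2 i j).le _ (abs_nonneg _) hε
      rw [abs_of_nonneg (hK j).1]; exact (hK j).2
    refine (Finset.sum_le_sum this).trans ?_
    simp
  have e3 : |(β i (t+s) - β i t) * (w * Real.exp (-(c i (t+s) * w)))| ≤ ε * K := by
    rw [abs_mul]
    apply mul_le_mul (p3 i).le _ (abs_nonneg _) hε
    rw [abs_of_nonneg (mul_nonneg hK'.1 (Real.exp_pos _).le)]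
    have : Real.exp (-(c i (t+s) * w)) ≤ 1 := by
      apply Real.exp_le_one_iff.2
      have := mul_nonneg (H.c₀pos.le.trans (H.cc i (t+s))) hK'.1
      linarith
    have := mul_le_of_le_one_right hK'.1 this
    linarith [hK'.2]
  have e4 : |β i t * w * (Real.exp (-(c i (t+s) * w)) - Real.exp (-(c i t * w)))| ≤ B * K * (ε * K) := by
    rw [abs_mul]
    apply mul_le_mul _ _ (abs_nonneg _) (by positivity)
    · rw [abs_of_nonneg (mul_nonneg (H.b0 i t) hK'.1)]
      exact mul_le_mul (H.bB i t) hK'.2 hK'.1 hB.le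
    · refine (exp_neg_lip (mul_nonneg (H.c₀pos.le.trans (H.cc i (t+s))) hK'.1)
        (mul_nonneg (H.c₀pos.le.trans (H.cc i t)) hK'.1)).trans ?_
      rw [← sub_mul, abs_mul]
      apply mul_le_mul (p4 i).le _ (abs_nonneg _) hε
      rw [abs_of_nonneg hK'.1]; exact hK'.2
  have e5 : rhs d a β c r i (t + s) y - rhs d a β c r i t (fun u => y (u + s)) =
      -((d i (t+s) - d i t) * y (t+s) i) + ∑ j, (a i j (t+s) - a i j t) * y (t+s) j +
      (β i (t+s) - β i t) * (w * Real.exp (-(c i (t+s) * w))) +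
      β i t * w * (Real.exp (-(c i (t+s) * w)) - Real.exp (-(c i t * w))) := by
    unfold rhs
    simp only [sub_mul, Finset.sum_sub_distrib]
    rw [show t - r i + s = t + s - r i by ring, ← hw]
    ring
  rw [e5]
  rw [abs_le] at *
  constructor <;> linarith [e1.1, e1.2, e2.1, e2.2, e3.1, e3.2, e4.1, e4.2]

theorem apx_shift (H : Core d a β c r μ η₀ L κ B R c₀) {y : ℝ → Fin m → ℝ} {s ε M K t₁ : ℝ}
    (hM : 0 < M) (hp : Per d a β c ε s)
    (hy : Apx d a β c r R 0 M K t₁ y (fun t i => rhs d a β c r i t y)) :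
    Apx d a β c r R (ε * (K + m * K + K + B * K * K)) M K (t₁ - s) (fun t => y (t + s))
      (fun t i => rhs d a β c r i (t + s) y) where
  der i t ht := by
    have := hy.der i (t + s) (by linarith)
    exact this.comp_add_const t s
  cont i := (hy.cont i).comp (f := fun u => u + s) (by fun_prop) (fun u (hu : t₁ - s ≤ u) => by
    show t₁ ≤ u + s
    linarith)
  err i t ht := by
    have hR := H.Rpos
    have h1 := H.rle i
    exact rhs_shift H i hp
      (fun j => ⟨hM.le.trans (hy.lb j _ (by linarith)), hy.ub j _ (by linarith)⟩)
      ⟨hM.le.trans (hy.lb i _ (by linarith)), hy.ub i _ (by linarith)⟩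
  lb i t ht := hy.lb i _ (by linarith)
  ub i t ht := hy.ub i _ (by linarith)

theorem limit_sol (H : Core d a β c r μ η₀ L κ B R c₀) {M K : ℝ} (hM : 0 < M) (hMK : M ≤ K)
    {x x' : ℕ → ℝ → Fin m → ℝ} {ε τ : ℕ → ℝ} (hε : Tendsto ε atTop (𝓝 0))
    (hτ : Tendsto τ atTop atBot)
    (hx : ∀ n, Apx d a β c r R (ε n) M K (τ n) (x n) (x' n)) :
    ∃ b : ℝ → Fin m → ℝ, (∀ t i, M ≤ b t i ∧ b t i ≤ K) ∧ EntireSolN d a β c r b := by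
  have hR := H.Rpos
  have hB := H.Bpos
  have cau : ∀ e > 0, ∀ A : ℝ, ∃ N, ∀ n, N ≤ n → ∀ k, N ≤ k → ∀ t, A ≤ t → ∀ i, |x n t i - x k t i| < e := by
    intro e he A
    obtain ⟨ε₁, hε₁, T, hT⟩ := robust' H hM hMK he
    have h1 : ∀ᶠ n in atTop, ε n ≤ ε₁ := hε.eventually_le_const hε₁
    have h2 : ∀ᶠ n in atTop, τ n ≤ A - |T| := hτ.eventually (eventually_le_atBot _)
    obtain ⟨N, hN⟩ := eventually_atTop.1 (h1.and h2)
    refine ⟨N, fun n hn k hk t ht i => ?_⟩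
    have l1 := le_abs_self T
    have l2 := abs_nonneg T
    exact hT _ _ _ _ (A - |T|) (((hx n).mono (hN n hn).2).weaken (hN n hn).1 le_rfl le_rfl)
      (((hx k).mono (hN k hk).2).weaken (hN k hk).1 le_rfl le_rfl) t (by linarith) (by linarith) i
  have hlim : ∀ t i, ∃ l, Tendsto (fun n => x n t i) atTop (𝓝 l) := by
    intro t i
    apply cauchySeq_tendsto_of_complete
    rw [Metric.cauchySeq_iff]
    intro e he
    obtain ⟨N, hN⟩ := cau e he t
    exact ⟨N, fun n hn k hk => by rw [Real.dist_eq]; exact hN n hn k hk t le_rfl i⟩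
  choose b hb using hlim
  have hbb : ∀ t i, M ≤ b t i ∧ b t i ≤ K := by
    intro t i
    have h2 : ∀ᶠ n in atTop, τ n ≤ t := hτ.eventually (eventually_le_atBot _)
    constructor
    · apply ge_of_tendsto (hb t i)
      filter_upwards [h2] with n hn
      exact (hx n).lb i t (by linarith)
    · apply le_of_tendsto (hb t i)
      filter_upwards [h2] with n hn
      exact (hx n).ub i t (by linarith)
  have unif : ∀ e > 0, ∀ A : ℝ, ∃ N, ∀ n, N ≤ n → ∀ t, A ≤ t → ∀ i, |x n t i - b t i| ≤ e := by
    intro e he A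
    obtain ⟨N, hN⟩ := cau e he A
    refine ⟨N, fun n hn t ht i => ?_⟩
    have h1 : Tendsto (fun k => |x n t i - x k t i|) atTop (𝓝 |x n t i - b t i|) :=
      (tendsto_const_nhds.sub (hb t i)).abs
    apply le_of_tendsto h1
    filter_upwards [eventually_ge_atTop N] with k hk
    exact (hN n hn k hk t ht i).le
  refine ⟨b, hbb, fun i t => ?_⟩
  have h2 : ∀ᶠ n in atTop, τ n ≤ t - 1 := hτ.eventually (eventually_le_atBot _)
  refine hasDerivAt_of_tendstoUniformlyOn (l := atTop) (s := Ioi (t - 1)) (f := fun n u => x n u i)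
    (f' := fun n u => x' n u i) (g := fun u => b u i) (g' := fun u => rhs d a β c r i u b) isOpen_Ioi ?_ ?_ (fun u _ => hb u i)
    (show t - 1 < t by linarith)
  · rw [Metric.tendstoUniformlyOn_iff]
    intro e he
    have hC : (0:ℝ) < (m + 2) * B := by positivity
    obtain ⟨N, hN⟩ := unif (e / 3 / ((m + 2) * B)) (by positivity) (t - 1 - R)
    have h3 : ∀ᶠ n in atTop, ε n ≤ e/3 := hε.eventually_le_const (by positivity)
    filter_upwards [h2, h3, eventually_ge_atTop N] with n hn1 hn2 hn3 u hu
    have hu' : t - 1 < u := hu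
    have hri := H.rle i
    have k1 := (hx n).err i u (by linarith)
    have k2 := rhs_lip H (x := x n) (y := b) (t := u) (D := e / 3 / ((m + 2) * B)) i
      (hM.le.trans ((hx n).lb i _ (by linarith))) (hM.le.trans (hbb _ _).1)
      (fun j => hN n hn3 u (by linarith) j) (hN n hn3 _ (by linarith) i)
    rw [mul_div_cancel₀ _ hC.ne'] at k2
    rw [dist_comm, Real.dist_eq]
    rw [abs_le] at k1 k2
    rw [abs_lt]
    constructor <;> linarith [k1.1, k1.2, k2.1, k2.2]
  · filter_upwards [h2] with n hn u hu
    have hu' : t - 1 < u := hu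
    exact (hx n).der i u (by linarith)

theorem entire_apx (H : Core d a β c r μ η₀ L κ B R c₀) (hN : NicholsonHyps m d a β c) {M K : ℝ}
    {b : ℝ → Fin m → ℝ} (hb : ∀ t i, M ≤ b t i ∧ b t i ≤ K) (he : EntireSolN d a β c r b) (t₀ : ℝ) :
    Apx d a β c r R 0 M K t₀ b (fun t i => rhs d a β c r i t b) where
  der i t _ := he i t
  cont i := rhs_cont (fun i => (hN.1 i).1) (fun i j => (hN.2.1 i j).1) (fun i => (hN.2.2.1 i).1)
    (fun i => (hN.2.2.2.1 i).1) H.rpos (fun i t _ => (he i t).continuousAt.continuousWithinAt) i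
  err i t _ := by simp
  lb i t _ := (hb t i).1
  ub i t _ := (hb t i).2

theorem exists_entire (hm : 1 ≤ m) (H : Core d a β c r μ η₀ L κ B R c₀) (hN : NicholsonHyps m d a β c)
    {φ : XN m r} {y : ℝ → Fin m → ℝ} (hy : SolN d a β c r φ y) {M : ℝ} (hM : 0 < M)
    {s₀ : ℝ} (hlb : ∀ t, s₀ ≤ t → ∀ i, M ≤ y t i) :
    ∃ K, M ≤ K ∧ ∃ b : ℝ → Fin m → ℝ, (∀ t i, M ≤ b t i ∧ b t i ≤ K) ∧ EntireSolN d a β c r b := by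
  obtain ⟨t₁, K, hMK, ht₁, hA⟩ := sol_apx hm H hN hy hM hlb
  have hs : ∀ n : ℕ, ∃ s : ℝ, n ≤ s ∧ Per d a β c (1 / ((n:ℝ) + 1)) s := fun n => by
    obtain ⟨L, hL, h⟩ := coefs_common hN (ε := 1 / ((n:ℝ) + 1)) (by positivity)
    obtain ⟨s, hs, h⟩ := h n
    exact ⟨s, hs.1, h⟩
  choose s hs1 hs2 using hs
  refine ⟨K, hMK, limit_sol H hM hMK (τ := fun n => t₁ - s n) ?_ ?_ (fun n => apx_shift H hM (hs2 n) hA)⟩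
  · have := (tendsto_one_div_add_atTop_nhds_zero_nat (𝕜 := ℝ)).mul_const (K + m * K + K + B * K * K)
    rwa [zero_mul] at this
  · refine tendsto_atBot_mono (g := fun n => t₁ - s n) (f := fun n : ℕ => t₁ - (n:ℝ)) (fun n => by linarith [hs1 n]) ?_
    exact tendsto_atBot_add_const_left _ t₁ (tendsto_neg_atTop_atBot.comp tendsto_natCast_atTop_atTop)

theorem entire_AP (H : Core d a β c r μ η₀ L κ B R c₀) (hN : NicholsonHyps m d a β c) {M K : ℝ}
    (hM : 0 < M) (hMK : M ≤ K)
    {b : ℝ → Fin m → ℝ} (hb : ∀ t i, M ≤ b t i ∧ b t i ≤ K) (he : EntireSolN d a β c r b) (i : Fin m) :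
    AlmostPeriodic (fun t => b t i) := by
  have hB := H.Bpos
  refine ⟨continuous_iff_continuousAt.2 (fun t => (he i t).continuousAt), fun e hpos => ?_⟩
  obtain ⟨ε₁, hε₁, T, hT⟩ := robust' H hM hMK hpos
  have hK : 0 < K := by linarith
  have hC : 0 < K + m * K + K + B * K * K := by positivity
  obtain ⟨L, hL, h⟩ := coefs_common hN (ε := ε₁ / (K + m * K + K + B * K * K)) (by positivity)
  refine ⟨L, hL, fun p => ?_⟩
  obtain ⟨s, hs, hp⟩ := h p
  refine ⟨s, hs, fun t => ?_⟩
  have l1 := le_abs_self T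
  have l2 := abs_nonneg T
  have h1 := apx_shift H hM hp (entire_apx H hN hb he (t - |T| + s))
  rw [div_mul_cancel₀ _ hC.ne', add_sub_cancel_right] at h1
  exact hT _ _ _ _ (t - |T|) h1 ((entire_apx H hN hb he (t - |T|)).weaken hε₁.le le_rfl le_rfl)
    t (by linarith) (by linarith) i

theorem main18
    {m : ℕ} (hm : 1 ≤ m)
    (d : Fin m → ℝ → ℝ) (a : Fin m → Fin m → ℝ → ℝ) (β c : Fin m → ℝ → ℝ)
    (r : Fin m → ℝ) (hr : ∀ i, 0 < r i)
    (hN : NicholsonHyps m d a β c)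
    (hcond : ∀ i, r i * supR (β i) * Real.exp (supR (d i) * r i) < Real.exp 1)
    (hpers : ∃ M : ℝ, 0 < M ∧
      ∀ φ : XN m r, XPos φ → (∀ i, 0 < φ i (pt0N r hr i)) →
        ∀ y : ℝ → Fin m → ℝ, SolN d a β c r φ y →
          ∃ t₀ : ℝ, ∀ t, t₀ ≤ t → ∀ i, M ≤ y t i) :
    ∃ b : ℝ → Fin m → ℝ,
      (∀ i, AlmostPeriodic (fun t => b t i)) ∧
      (∀ i, ∃ δ > 0, ∀ t, δ ≤ b t i) ∧
      EntireSolN d a β c r b ∧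
      (∀ φ : XN m r, XPos φ → (∀ i, 0 < φ i (pt0N r hr i)) →
        ∀ y : ℝ → Fin m → ℝ, SolN d a β c r φ y →
          ∀ ε > 0, ∃ T : ℝ, ∀ t, T ≤ t → ∀ i, ∀ s : Set.Icc (-(r i)) (0:ℝ),
            |y (t + (s : ℝ)) i - b (t + (s : ℝ)) i| < ε) ∧
      ∀ b' : ℝ → Fin m → ℝ,
        (∀ i, AlmostPeriodic (fun t => b' t i)) →
        (∀ i, ∃ δ > 0, ∀ t, δ ≤ b' t i) →
        EntireSolN d a β c r b' →
        b' = b := by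
  obtain ⟨η₀, L, κ, B, R, c₀, H⟩ := exists_core hr hN hcond
  obtain ⟨M, hM, hp⟩ := hpers
  obtain ⟨y, hy⟩ := exists_sol H hN
  obtain ⟨s₀, hs₀⟩ := hp _ (fun _ _ => zero_le_one) (fun _ => one_pos) y hy
  obtain ⟨K, hMK, b, hb, he⟩ := exists_entire hm H hN hy hM hs₀
  refine ⟨b, entire_AP H hN hM hMK hb he, fun i => ⟨M, hM, fun t => (hb t i).1⟩, he, ?_, ?_⟩
  · intro φ hφ hφ0 y hy e hpos
    obtain ⟨s₀, hs₀⟩ := hp φ hφ hφ0 y hy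
    obtain ⟨t₁, K', hMK', ht₁, hA⟩ := sol_apx hm H hN hy hM hs₀
    obtain ⟨ε₁, hε₁, T, hT⟩ := robust' H hM (hMK.trans (le_max_left K K')) hpos
    refine ⟨t₁ + |T| + R, fun t ht i s => ?_⟩
    have l1 := le_abs_self T
    have l2 := abs_nonneg T
    have l3 := s.2.1
    have l4 := H.rle i
    exact hT _ _ _ _ t₁ (hA.weaken hε₁.le le_rfl (le_max_right _ _))
      ((entire_apx H hN hb he t₁).weaken hε₁.le le_rfl (le_max_left _ _)) _ (by linarith) (by linarith) i
  · intro b' hAP hδ he'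
    choose δ hδ0 hδ1 using hδ
    obtain ⟨M', hM', hMδ⟩ := fin_lb δ hδ0
    choose Bk hBk using fun i => AP_bdd (hAP i)
    obtain ⟨K', hK', hBK⟩ := fin_ub Bk
    have hb' : ∀ t i, M' ≤ b' t i ∧ b' t i ≤ K' := fun t i =>
      ⟨(hMδ i).trans (hδ1 i t), ((le_abs_self _).trans (hBk i t)).trans (hBK i)⟩
    funext t i
    by_contra hne
    have hpos : 0 < |b' t i - b t i| := abs_pos.2 (sub_ne_zero.2 hne)
    obtain ⟨ε₁, hε₁, T, hT⟩ := robust' H (M := min M M') (K := max K K') (lt_min hM hM')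
      ((min_le_left _ _).trans (hMK.trans (le_max_left K K'))) hpos
    have l1 := le_abs_self T
    have l2 := abs_nonneg T
    exact lt_irrefl _ (hT _ _ _ _ (t - |T|)
      ((entire_apx H hN hb' he' (t - |T|)).weaken hε₁.le (min_le_right _ _) (le_max_right _ _))
      ((entire_apx H hN hb he (t - |T|)).weaken hε₁.le (min_le_left _ _) (le_max_left _ _))
      t (by linarith) (by linarith) i)

end Nicholson

namespace Nicholson

/-- under the strict condition `rᵢ βᵢ⁺ e^{dᵢ⁺ rᵢ} < e` and uniform
persistence at `0`, there is a unique strongly positive almost periodic entire solution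
`b`, and it asymptotically attracts every solution with initial value `φ ∈ X₊`,
`φ(0) ≫ 0`. -/
theorem statement18
    {m : ℕ} (hm : 1 ≤ m)
    (d : Fin m → ℝ → ℝ) (a : Fin m → Fin m → ℝ → ℝ) (β c : Fin m → ℝ → ℝ)
    (r : Fin m → ℝ) (hr : ∀ i, 0 < r i)
    (hN : NicholsonHyps m d a β c)
    (hcond : ∀ i, r i * supR (β i) * Real.exp (supR (d i) * r i) < Real.exp 1)
    (hpers : ∃ M : ℝ, 0 < M ∧
      ∀ φ : XN m r, XPos φ → (∀ i, 0 < φ i (pt0N r hr i)) →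
        ∀ y : ℝ → Fin m → ℝ, SolN d a β c r φ y →
          ∃ t₀ : ℝ, ∀ t, t₀ ≤ t → ∀ i, M ≤ y t i) :
    ∃ b : ℝ → Fin m → ℝ,
      -- b is almost periodic, componentwise
      (∀ i, AlmostPeriodic (fun t => b t i)) ∧
      -- b is bounded away from 0
      (∀ i, ∃ δ > 0, ∀ t, δ ≤ b t i) ∧
      -- b is an entire solution of the Nicholson system
      EntireSolN d a β c r b ∧
      -- b attracts every solution starting at φ ∈ X₊ with φ(0) ≫ 0
      (∀ φ : XN m r, XPos φ → (∀ i, 0 < φ i (pt0N r hr i)) →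
        ∀ y : ℝ → Fin m → ℝ, SolN d a β c r φ y →
          ∀ ε > 0, ∃ T : ℝ, ∀ t, T ≤ t → ∀ i, ∀ s : Set.Icc (-(r i)) (0:ℝ),
            |y (t + (s : ℝ)) i - b (t + (s : ℝ)) i| < ε) ∧
      -- b is the unique almost periodic entire solution bounded away from 0
      ∀ b' : ℝ → Fin m → ℝ,
        (∀ i, AlmostPeriodic (fun t => b' t i)) →
        (∀ i, ∃ δ > 0, ∀ t, δ ≤ b' t i) →
        EntireSolN d a β c r b' →
        b' = b := by
  exact main18 hm d a β c r hr hN hcond hpers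

end Nicholson
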